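/- arXiv:math/0603374 — 2 statements merged into one kernel-verified Lean document; each statement's English description precedes it below -/
import Mathlib

section
/- Let (w_+, w_-) ∈ W × W with (w_+, w_-) ≠ (w_0, w_0). Then the 𝓗-invariant prime ideal Q_{w_+,w_-} of O_q(G) contains either one of the elements c^{ϖ_i}_{−ϖ_i, w_0ϖ_i} or one of the elements c^{ϖ_i}_{−w_0ϖ_i, ϖ_i}, for some i ∈ {1,…,n}. -/
open scoped TensorProduct

/-- The `q`-factorial `(q - q⁻¹)(q² - q⁻²)⋯(qᵐ - q⁻ᵐ)`. -/
noncomputable def qfac (t : ℂ) (m : ℕ) : ℂ :=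
  ∏ j ∈ Finset.range m, (t ^ (j + 1) - t⁻¹ ^ (j + 1))

/-- The `q`-binomial coefficient `[m k]` at parameter `t`. -/
noncomputable def qbinom (t : ℂ) (m k : ℕ) : ℂ :=
  qfac t m / (qfac t k * qfac t (m - k))

/-- The defining relations of the quantised enveloping algebra `U_q(𝔤)` associated to a
Cartan matrix `a` with symmetrising integers `d`, on elements `E i`, `F i`, `K i` of a
`ℂ`-algebra `B`: the `K i` are commuting units, conjugation by `K i` rescales `E j` and
`F j` by `q_i^{±a i j}` (where `q_i = q^{d i}`), the commutator `[E i, F j]` is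
`δ_{ij} (K_i - K_i⁻¹)/(q_i - q_i⁻¹)`, and the quantum Serre relations hold. -/
def UqRels (q : ℂ) {n : ℕ} (a : Fin n → Fin n → ℤ) (d : Fin n → ℕ)
    (B : Type) [Ring B] [Algebra ℂ B] (E F : Fin n → B) (K : Fin n → Bˣ) : Prop :=
  (∀ i j, (K i : B) * (K j : B) = (K j : B) * (K i : B)) ∧
  (∀ i j, (K i : B) * E j = (q ^ ((d i : ℤ) * a i j)) • (E j * (K i : B))) ∧
  (∀ i j, (K i : B) * F j = (q ^ (-((d i : ℤ) * a i j))) • (F j * (K i : B))) ∧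
  (∀ i j, E i * F j - F j * E i =
    if i = j then (q ^ (d i : ℤ) - q ^ (-(d i : ℤ)))⁻¹ • ((K i : B) - (((K i)⁻¹ : Bˣ) : B))
    else 0) ∧
  (∀ i j, i ≠ j → ∑ k ∈ Finset.range ((1 - a i j).toNat + 1),
      ((-1 : ℂ) ^ k * qbinom (q ^ (d i : ℤ)) ((1 - a i j).toNat) k) •
        (E i ^ ((1 - a i j).toNat - k) * E j * E i ^ k) = 0) ∧
  (∀ i j, i ≠ j → ∑ k ∈ Finset.range ((1 - a i j).toNat + 1),
      ((-1 : ℂ) ^ k * qbinom (q ^ (d i : ℤ)) ((1 - a i j).toNat) k) •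
        (F i ^ ((1 - a i j).toNat - k) * F j * F i ^ k) = 0)

/-- The weight space of weight `μ = ∑ μ i ϖ i` in a `U_q(𝔤)`-module: the set of vectors on
which each `K i` acts by the scalar `q^{(μ, α_i)} = q^{μ i * d i}`. -/
noncomputable def wtSp (q : ℂ) {n : ℕ} (d : Fin n → ℕ)
    {U : Type} [Ring U] [Algebra ℂ U] (K : Fin n → Uˣ)
    {Vc : Type} [AddCommGroup Vc] [Module ℂ Vc] (ρ : U →ₐ[ℂ] Module.End ℂ Vc)
    (μ : Fin n → ℤ) : Submodule ℂ Vc :=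
  ⨅ i : Fin n, LinearMap.ker (ρ (K i : U) - (q ^ (μ i * (d i : ℤ))) • (1 : Module.End ℂ Vc))

/-- `ξ` is a dual vector of weight `μ`:  equivalently (via the antipode-twisted action on the
dual module), `ξ` vanishes on every weight space of weight `ν ≠ -μ`. -/
noncomputable def inDualWt (q : ℂ) {n : ℕ} (d : Fin n → ℕ)
    {U : Type} [Ring U] [Algebra ℂ U] (K : Fin n → Uˣ)
    {Vc : Type} [AddCommGroup Vc] [Module ℂ Vc] (ρ : U →ₐ[ℂ] Module.End ℂ Vc)
    (μ : Fin n → ℤ) (ξ : Module.Dual ℂ Vc) : Prop :=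
  ∀ ν : Fin n → ℤ, ν ≠ -μ → ∀ x ∈ wtSp q d K ρ ν, ξ x = 0

/-- The Demazure-type submodule generated by the weight space of weight `ν` under the
subalgebra of `U` generated by `gens` (take `gens = Set.range E` for `V⁺_w(λ)` with
`ν = wλ`, and `gens = Set.range F` for `V⁻_w(λ)`). -/
noncomputable def demazure (q : ℂ) {n : ℕ} (d : Fin n → ℕ)
    {U : Type} [Ring U] [Algebra ℂ U] (gens : Set U) (K : Fin n → Uˣ)
    {Vc : Type} [AddCommGroup Vc] [Module ℂ Vc] (ρ : U →ₐ[ℂ] Module.End ℂ Vc)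
    (ν : Fin n → ℤ) : Submodule ℂ Vc :=
  Submodule.span ℂ
    {x | ∃ y ∈ Algebra.adjoin ℂ gens, ∃ u ∈ wtSp q d K ρ ν, x = ρ y u}

/-- A two-sided ideal of a (possibly noncommutative) ring is prime if it is proper and
`x R y ⊆ P` implies `x ∈ P` or `y ∈ P`. -/
def IsPrimeTwoSided {R : Type*} [Ring R] (P : TwoSidedIdeal R) : Prop :=
  P ≠ ⊤ ∧ ∀ x y : R, (∀ r : R, x * r * y ∈ P) → x ∈ P ∨ y ∈ P

/-- An element `r` of a ring is normal if `rR = Rr`. -/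
def IsNormalElem {R : Type*} [Ring R] (r : R) : Prop :=
  (∀ x, ∃ y, r * x = y * r) ∧ ∀ x, ∃ y, x * r = r * y

/-- The ideal `Q⁺_{w}` of `O_q(G)`: generated by the coordinate functions `c^{ϖ_j}_{ξ,v}` with
`v` a highest weight vector of `V(ϖ_j)` and `ξ` orthogonal to the Demazure module
`V⁺_w(ϖ_j)`. -/
noncomputable def Qplus (q : ℂ) {n : ℕ} (d : Fin n → ℕ)
    {U : Type} [Ring U] [Algebra ℂ U] (E : Fin n → U) (K : Fin n → Uˣ)
    {V : (Fin n → ℕ) → Type} [∀ c, AddCommGroup (V c)] [∀ c, Module ℂ (V c)]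
    (ρ : ∀ c, U →ₐ[ℂ] Module.End ℂ (V c))
    {W : Type} [Group W] (σ : W →* Multiplicative (AddAut (Fin n → ℤ)))
    {A : Type} [Ring A]
    (cf : ∀ c : Fin n → ℕ, Module.Dual ℂ (V c) → V c → A)
    (w : W) : TwoSidedIdeal A :=
  TwoSidedIdeal.span
    {x | ∃ j : Fin n, ∃ ξ : Module.Dual ℂ (V (Pi.single j 1)),
      ∃ v ∈ wtSp q d K (ρ (Pi.single j 1)) (fun k => ((Pi.single j 1 : Fin n → ℕ) k : ℤ)),
        (∀ y ∈ demazure q d (Set.range E) K (ρ (Pi.single j 1))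
            (σ w (fun k => ((Pi.single j 1 : Fin n → ℕ) k : ℤ))), ξ y = 0) ∧
        x = cf (Pi.single j 1) ξ v}

/-- The ideal `Q⁻_{w}` of `O_q(G)`: generated by the coordinate functions `c^{ϖ_j}_{ξ,v}` with
`v` a lowest weight vector of `V(ϖ_j)` and `ξ` orthogonal to the Demazure module
`V⁻_{w w₀}(ϖ_j)`. -/
noncomputable def Qminus (q : ℂ) {n : ℕ} (d : Fin n → ℕ)
    {U : Type} [Ring U] [Algebra ℂ U] (F : Fin n → U) (K : Fin n → Uˣ)
    {V : (Fin n → ℕ) → Type} [∀ c, AddCommGroup (V c)] [∀ c, Module ℂ (V c)]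
    (ρ : ∀ c, U →ₐ[ℂ] Module.End ℂ (V c))
    {W : Type} [Group W] (σ : W →* Multiplicative (AddAut (Fin n → ℤ))) (w₀ : W)
    {A : Type} [Ring A]
    (cf : ∀ c : Fin n → ℕ, Module.Dual ℂ (V c) → V c → A)
    (w : W) : TwoSidedIdeal A :=
  TwoSidedIdeal.span
    {x | ∃ j : Fin n, ∃ ξ : Module.Dual ℂ (V (Pi.single j 1)),
      ∃ v ∈ wtSp q d K (ρ (Pi.single j 1)) (σ w₀ (fun k => ((Pi.single j 1 : Fin n → ℕ) k : ℤ))),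
        (∀ y ∈ demazure q d (Set.range F) K (ρ (Pi.single j 1))
            (σ (w * w₀) (fun k => ((Pi.single j 1 : Fin n → ℕ) k : ℤ))), ξ y = 0) ∧
        x = cf (Pi.single j 1) ξ v}


/-- A finite group generated by reflections has an invariant norm on the weight lattice, for which
adding a nonzero element of the positive root cone to a dominant weight changes the norm. -/
theorem exists_invariant_norm {n : ℕ} (a : Fin n → Fin n → ℤ) (ha_diag : ∀ i, a i i = 2)
    (W : Type) [Group W] [Finite W] (g : W → (Fin n → ℤ) →+ (Fin n → ℤ))
    (hone : ∀ x, g 1 x = x) (hmul : ∀ v w x, g (v * w) x = g v (g w x))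
    (s : Fin n → W) (hs : ∀ i (μ : Fin n → ℤ), g (s i) μ = fun k => μ k - μ i * a k i) :
    ∃ N : (Fin n → ℤ) → ℤ, (∀ w x, N (g w x) = N x) ∧ (∀ x, N (-x) = N x) ∧
      ∀ x : Fin n → ℤ, (∀ i, 0 ≤ x i) →
        ∀ β ∈ AddSubmonoid.closure (Set.range fun j : Fin n => fun k => a k j),
          N (x + β) = N x → β = 0 := by
  classical
  have := Fintype.ofFinite W
  let B : (Fin n → ℤ) → (Fin n → ℤ) → ℤ := fun x y => ∑ w : W, ∑ k, g w x k * g w y k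
  have hinv : ∀ w x y, B (g w x) (g w y) = B x y := by
    intro w x y
    simp only [B, ← hmul]
    exact Fintype.sum_equiv (Equiv.mulRight w) _ _ (fun v => rfl)
  have hadd : ∀ x y z, B x (y + z) = B x y + B x z := by
    intro x y z
    simp only [B, map_add, Pi.add_apply, mul_add, Finset.sum_add_distrib]
  have hcomm : ∀ x y, B x y = B y x := by
    intro x y
    simp only [B, mul_comm]
  have hneg : ∀ x y, B x (-y) = - B x y := by
    intro x y
    simp only [B, map_neg, Pi.neg_apply, mul_neg, Finset.sum_neg_distrib]
  have hzero : ∀ x, B x 0 = 0 := by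
    intro x
    simp [B]
  have hzsmul : ∀ x (m : ℤ) y, B x (m • y) = m * B x y := by
    intro x m y
    simp only [B, map_zsmul, Pi.smul_apply, smul_eq_mul, Finset.mul_sum]
    refine Finset.sum_congr rfl fun w _ => Finset.sum_congr rfl fun k _ => by ring
  have hnn : ∀ x, 0 ≤ B x x := by
    intro x
    exact Finset.sum_nonneg fun w _ => Finset.sum_nonneg fun k _ => mul_self_nonneg _
  have hdef : ∀ x, B x x ≤ 0 → x = 0 := by
    intro x hx
    have h0 : B x x = 0 := le_antisymm hx (hnn x)
    have h1 := (Finset.sum_eq_zero_iff_of_nonneg (fun w _ =>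
      Finset.sum_nonneg fun k _ => mul_self_nonneg _)).1 h0 1 (Finset.mem_univ _)
    have h2 := (Finset.sum_eq_zero_iff_of_nonneg (fun k _ => mul_self_nonneg _)).1 h1
    funext k
    have := h2 k (Finset.mem_univ _)
    rw [hone] at this
    simpa using this
  refine ⟨fun x => B x x, fun w x => hinv w x x, ?_, ?_⟩
  · intro x
    simp only
    rw [hneg, hcomm, hneg, neg_neg]
  · intro x hx β hβ h
    have hroot : ∀ j, 0 ≤ B x (fun k => a k j) := by
      intro j
      set α : Fin n → ℤ := fun k => a k j with hα
      have e1 : g (s j) α = -α := by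
        rw [hs]; funext k; simp [hα, ha_diag]; ring
      have e2 : g (s j) x = x + (-(x j)) • α := by
        rw [hs]; funext k; simp [hα]; ring
      have e3 := hinv (s j) x α
      rw [e1, e2, hneg, hcomm, hadd, hzsmul, hcomm α x] at e3
      have := mul_nonneg (hx j) (hnn α)
      linarith
    have hpos : 0 ≤ B x β := by
      clear h
      induction hβ using AddSubmonoid.closure_induction with
      | mem y hy => obtain ⟨j, rfl⟩ := hy; exact hroot j
      | zero => rw [hzero]
      | add y z _ _ h1 h2 => rw [hadd]; exact add_nonneg h1 h2
    apply hdef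
    simp only at h
    rw [hadd, hcomm, hadd, hcomm (x + β), hadd, hcomm β x] at h
    linarith

theorem mem_wtSp {q : ℂ} {n : ℕ} {d : Fin n → ℕ}
    {U : Type} [Ring U] [Algebra ℂ U] {K : Fin n → Uˣ}
    {Vc : Type} [AddCommGroup Vc] [Module ℂ Vc] {ρ : U →ₐ[ℂ] Module.End ℂ Vc}
    {μ : Fin n → ℤ} {x : Vc} :
    x ∈ wtSp q d K ρ μ ↔ ∀ i, ρ (K i : U) x = (q ^ (μ i * (d i : ℤ))) • x := by
  simp [wtSp, Submodule.mem_iInf, sub_eq_zero]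

/-- An element commuting with the `K i` up to powers of `q` shifts weights. -/
theorem shift_wtSp {q : ℂ} (hq0 : q ≠ 0) {n : ℕ} {d : Fin n → ℕ}
    {U : Type} [Ring U] [Algebra ℂ U] {K : Fin n → Uˣ}
    {Vc : Type} [AddCommGroup Vc] [Module ℂ Vc] {ρ : U →ₐ[ℂ] Module.End ℂ Vc}
    {μ γ : Fin n → ℤ} {e : U}
    (he : ∀ i, (K i : U) * e = (q ^ (γ i * (d i : ℤ))) • (e * (K i : U)))
    {x : Vc} (hx : x ∈ wtSp q d K ρ μ) : ρ e x ∈ wtSp q d K ρ (μ + γ) := by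
  rw [mem_wtSp] at hx ⊢
  intro i
  rw [← Module.End.mul_apply, ← map_mul, he, map_smul, map_mul, LinearMap.smul_apply,
    Module.End.mul_apply, hx, map_smul, smul_smul, ← zpow_add₀ hq0, Pi.add_apply, add_mul,
    add_comm]

theorem demazure_le {q : ℂ} (hq0 : q ≠ 0) {n : ℕ} {d : Fin n → ℕ}
    {U : Type} [Ring U] [Algebra ℂ U] {K : Fin n → Uˣ}
    {Vc : Type} [AddCommGroup Vc] [Module ℂ Vc] {ρ : U →ₐ[ℂ] Module.End ℂ Vc}
    {ν : Fin n → ℤ} (e : Fin n → U) (γ : Fin n → Fin n → ℤ)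
    (he : ∀ j i, (K i : U) * e j = (q ^ (γ j i * (d i : ℤ))) • (e j * (K i : U))) :
    demazure q d (Set.range e) K ρ ν ≤
      ⨆ β ∈ AddSubmonoid.closure (Set.range γ), wtSp q d K ρ (ν + β) := by
  set M := ⨆ β ∈ AddSubmonoid.closure (Set.range γ), wtSp q d K ρ (ν + β) with hM
  have hle : ∀ β ∈ AddSubmonoid.closure (Set.range γ), wtSp q d K ρ (ν + β) ≤ M := by
    intro β hβ
    exact le_iSup₂_of_le β hβ le_rfl
  have hstab : ∀ y ∈ Algebra.adjoin ℂ (Set.range e), ∀ x ∈ M, ρ y x ∈ M := by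
    intro y hy
    induction hy using Algebra.adjoin_induction with
    | mem y hy =>
      obtain ⟨j, rfl⟩ := hy
      suffices h : M ≤ M.comap (ρ (e j)) from fun x hx => h hx
      refine iSup₂_le fun β hβ x hx => ?_
      have := shift_wtSp hq0 (he j) hx
      rw [add_assoc] at this
      exact hle _ (add_mem hβ (AddSubmonoid.subset_closure ⟨j, rfl⟩)) this
    | algebraMap r =>
      intro x hx
      rw [AlgHom.commutes, Module.algebraMap_end_apply]
      exact M.smul_mem _ hx
    | add y z _ _ h1 h2 =>
      intro x hx
      rw [map_add, LinearMap.add_apply]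
      exact add_mem (h1 x hx) (h2 x hx)
    | mul y z _ _ h1 h2 =>
      intro x hx
      rw [map_mul, Module.End.mul_apply]
      exact h1 _ (h2 x hx)
  refine Submodule.span_le.2 ?_
  rintro x ⟨y, hy, u, hu, rfl⟩
  refine hstab y hy u (hle 0 (zero_mem _) ?_)
  rwa [add_zero]

theorem zpow_inj_of_transcendental {q : ℂ} (hq : Transcendental ℚ q) {m k : ℤ}
    (h : q ^ m = q ^ k) : m = k := by
  have hq0 : q ≠ 0 := by
    rintro rfl
    exact hq isAlgebraic_zero
  have key : ∀ r : ℕ, r ≠ 0 → q ^ r ≠ 1 := by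
    intro r hr h1
    apply hq
    refine IsAlgebraic.of_pow (n := r) (Nat.pos_of_ne_zero hr) ?_
    rw [h1]
    exact isAlgebraic_one
  by_contra hne
  have h1 : q ^ (m - k) = 1 := by
    rw [zpow_sub₀ hq0, h, div_self (zpow_ne_zero _ hq0)]
  have hr : (m - k).natAbs ≠ 0 := by omega
  apply key _ hr
  rcases Int.natAbs_eq (m - k) with h2 | h2
  · rw [h2, zpow_natCast] at h1; exact h1
  · rw [h2, zpow_neg, zpow_natCast, inv_eq_one] at h1; exact h1

theorem wtSp_indep {q : ℂ} (hq : Transcendental ℚ q) {n : ℕ} {d : Fin n → ℕ}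
    (hd : ∀ i, 0 < d i)
    {U : Type} [Ring U] [Algebra ℂ U] {K : Fin n → Uˣ}
    (hK : ∀ i j, (K i : U) * (K j : U) = (K j : U) * (K i : U))
    {Vc : Type} [AddCommGroup Vc] [Module ℂ Vc] {ρ : U →ₐ[ℂ] Module.End ℂ Vc} :
    iSupIndep fun μ : Fin n → ℤ => wtSp q d K ρ μ := by
  have h := Module.End.independent_iInf_maxGenEigenspace_of_forall_mapsTo
    (fun i : Fin n => ρ (K i : U)) (fun i j φ =>
      Module.End.mapsTo_maxGenEigenspace_of_comm (by
        show ρ (K j : U) * ρ (K i : U) = ρ (K i : U) * ρ (K j : U)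
        rw [← map_mul, ← map_mul, hK]) φ)
  have hinj : Function.Injective
      (fun (μ : Fin n → ℤ) (i : Fin n) => q ^ (μ i * (d i : ℤ))) := by
    intro μ ν hμν
    funext i
    have h1 := zpow_inj_of_transcendental hq (congrFun hμν i)
    have h2 : (d i : ℤ) ≠ 0 := by have := hd i; omega
    exact mul_right_cancel₀ h2 h1
  refine (h.comp hinj).mono fun μ => ?_
  refine iInf_mono fun i => ?_
  intro x hx
  refine (Module.End.mem_maxGenEigenspace _ _ _).2 ⟨1, ?_⟩
  simpa using hx

/-- Every subalgebra containing the generators is everything. -/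
theorem Uq_generated (q : ℂ) {n : ℕ} (a : Fin n → Fin n → ℤ) (d : Fin n → ℕ)
    (U : Type) [Ring U] [Algebra ℂ U]
    (E F : Fin n → U) (K : Fin n → Uˣ)
    (hrel : UqRels q a d U E F K)
    (hUuniv : ∀ (B : Type) [Ring B] [Algebra ℂ B] (E' F' : Fin n → B) (K' : Fin n → Bˣ),
      UqRels q a d B E' F' K' → ∃! φ : U →ₐ[ℂ] B,
        (∀ i, φ (E i) = E' i) ∧ (∀ i, φ (F i) = F' i) ∧ (∀ i, φ (K i : U) = (K' i : B)))
    (S : Subalgebra ℂ U) (hE : ∀ i, E i ∈ S) (hF : ∀ i, F i ∈ S) (hK : ∀ i, (K i : U) ∈ S)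
    (hK' : ∀ i, (((K i)⁻¹ : Uˣ) : U) ∈ S) (u : U) : u ∈ S := by
  let K' : Fin n → Sˣ := fun i =>
    ⟨⟨_, hK i⟩, ⟨_, hK' i⟩, Subtype.ext (by simp), Subtype.ext (by simp)⟩
  have hr : UqRels q a d S (fun i => ⟨E i, hE i⟩) (fun i => ⟨F i, hF i⟩) K' := by
    obtain ⟨h1, h2, h3, h4, h5, h6⟩ := hrel
    refine ⟨fun i j => Subtype.ext (h1 i j), fun i j => Subtype.ext (h2 i j),
      fun i j => Subtype.ext (h3 i j), fun i j => Subtype.ext ?_,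
      fun i j hij => Subtype.ext ?_, fun i j hij => Subtype.ext ?_⟩
    · have := h4 i j
      split_ifs at this ⊢
      · exact this
      · exact this
    · have := h5 i j hij
      push_cast
      exact this
    · have := h6 i j hij
      push_cast
      exact this
  obtain ⟨φ, ⟨p1, p2, p3⟩, -⟩ := hUuniv S _ _ K' hr
  obtain ⟨ψ, -, hψ⟩ := hUuniv U E F K hrel
  have e1 : S.val.comp φ = ψ := hψ _ ⟨fun i => by simp [p1], fun i => by simp [p2],
    fun i => by simp [p3, K']⟩
  have e2 : AlgHom.id ℂ U = ψ := hψ _ ⟨fun i => rfl, fun i => rfl, fun i => rfl⟩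
  have e3 : S.val.comp φ = AlgHom.id ℂ U := e1.trans e2.symm
  have := DFunLike.congr_fun e3 u
  simp only [AlgHom.comp_apply, AlgHom.id_apply] at this
  rw [← this]
  exact (φ u).2

/-- All weights of a simple module generated by a highest weight vector lie below the highest
weight. -/
theorem iSup_wtSp_below (q : ℂ) (hq0 : q ≠ 0) {n : ℕ} (a : Fin n → Fin n → ℤ) (d : Fin n → ℕ)
    (U : Type) [Ring U] [Algebra ℂ U]
    (E F : Fin n → U) (K : Fin n → Uˣ)
    (hrel : UqRels q a d U E F K)
    (hgen : ∀ S : Subalgebra ℂ U, (∀ i, E i ∈ S) → (∀ i, F i ∈ S) → (∀ i, (K i : U) ∈ S) →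
      (∀ i, (((K i)⁻¹ : Uˣ) : U) ∈ S) → ∀ u, u ∈ S)
    {Vc : Type} [AddCommGroup Vc] [Module ℂ Vc] (ρ : U →ₐ[ℂ] Module.End ℂ Vc)
    (hsimple : ∀ (N : Submodule ℂ Vc), (∀ (u : U), ∀ v ∈ N, ρ u v ∈ N) → N = ⊥ ∨ N = ⊤)
    (lam : Fin n → ℤ) (v : Vc) (hv0 : v ≠ 0) (hv : v ∈ wtSp q d K ρ lam)
    (hEv : ∀ i, ρ (E i) v = 0) :
    (⨆ β ∈ AddSubmonoid.closure (Set.range fun j : Fin n => fun k => - a k j),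
      wtSp q d K ρ (lam + β)) = ⊤ := by
  obtain ⟨h1, h2, h3, h4, -, -⟩ := hrel
  set C := AddSubmonoid.closure (Set.range fun j : Fin n => fun k => - a k j) with hC
  set M := ⨆ β ∈ C, wtSp q d K ρ (lam + β) with hM
  have hle : ∀ β ∈ C, wtSp q d K ρ (lam + β) ≤ M := fun β hβ => le_iSup₂_of_le β hβ le_rfl
  -- the family of submodules containing `v` and stable under `F`, `K`, `K⁻¹`
  let T : Set (Submodule ℂ Vc) := {P | v ∈ P ∧ (∀ i, ∀ x ∈ P, ρ (F i) x ∈ P) ∧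
    (∀ i, ∀ x ∈ P, ρ (K i : U) x ∈ P) ∧ (∀ i, ∀ x ∈ P, ρ (((K i)⁻¹ : Uˣ) : U) x ∈ P)}
  have hKinv : ∀ i x, ρ (((K i)⁻¹ : Uˣ) : U) (ρ (K i : U) x) = x := by
    intro i x
    rw [← Module.End.mul_apply, ← map_mul, Units.inv_mul, map_one, Module.End.one_apply]
  have hKinv' : ∀ i x, ρ (K i : U) (ρ (((K i)⁻¹ : Uˣ) : U) x) = x := by
    intro i x
    rw [← Module.End.mul_apply, ← map_mul, Units.mul_inv, map_one, Module.End.one_apply]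
  have hMT : M ∈ T := by
    refine ⟨hle 0 (zero_mem _) (by rwa [add_zero]), fun i => ?_, fun i => ?_, fun i => ?_⟩
    · suffices h : M ≤ M.comap (ρ (F i)) from fun x hx => h hx
      refine iSup₂_le fun β hβ x hx => ?_
      have := shift_wtSp hq0 (γ := fun k => - a k i) (e := F i) (fun k => by
        rw [h3 k i]; congr 2; ring) hx
      rw [add_assoc] at this
      exact hle _ (add_mem hβ (AddSubmonoid.subset_closure ⟨i, rfl⟩)) this
    · suffices h : M ≤ M.comap (ρ (K i : U)) from fun x hx => h hx
      refine iSup₂_le fun β hβ x hx => ?_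
      rw [Submodule.mem_comap, mem_wtSp.1 hx i]
      exact M.smul_mem _ (hle β hβ hx)
    · suffices h : M ≤ M.comap (ρ (((K i)⁻¹ : Uˣ) : U)) from fun x hx => h hx
      refine iSup₂_le fun β hβ x hx => ?_
      have e := congrArg (ρ (((K i)⁻¹ : Uˣ) : U)) (mem_wtSp.1 hx i)
      rw [hKinv, map_smul] at e
      rw [Submodule.mem_comap]
      have hz : q ^ ((lam + β) i * (d i : ℤ)) ≠ 0 := zpow_ne_zero _ hq0
      rw [← inv_smul_eq_iff₀ hz] at e
      rw [← e]
      exact M.smul_mem _ (hle β hβ hx)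
  set N := sInf T with hN
  have hNT : N ∈ T := by
    refine ⟨Submodule.mem_sInf.2 fun P hP => hP.1, fun i x hx => ?_, fun i x hx => ?_,
      fun i x hx => ?_⟩
    · exact Submodule.mem_sInf.2 fun P hP => hP.2.1 i x (Submodule.mem_sInf.1 hx P hP)
    · exact Submodule.mem_sInf.2 fun P hP => hP.2.2.1 i x (Submodule.mem_sInf.1 hx P hP)
    · exact Submodule.mem_sInf.2 fun P hP => hP.2.2.2 i x (Submodule.mem_sInf.1 hx P hP)
  obtain ⟨n1, n2, n3, n4⟩ := hNT
  let N' : Submodule ℂ Vc := N ⊓ ⨅ j, N.comap (ρ (E j))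
  have memN' : ∀ x, x ∈ N' ↔ x ∈ N ∧ ∀ j, ρ (E j) x ∈ N := by
    intro x; simp [N', Submodule.mem_iInf]
  have hEK : ∀ i j x, ρ (E j) (ρ (K i : U) x) =
      (q ^ ((d i : ℤ) * a i j))⁻¹ • ρ (K i : U) (ρ (E j) x) := by
    intro i j x
    have e := congrArg (fun t => ρ t x) (h2 i j)
    rw [map_smul, LinearMap.smul_apply, map_mul, map_mul, Module.End.mul_apply,
      Module.End.mul_apply] at e
    rw [e, inv_smul_smul₀ (zpow_ne_zero _ hq0)]
  have hN'T : N' ∈ T := by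
    refine ⟨(memN' _).2 ⟨n1, fun j => by rw [hEv]; exact zero_mem _⟩, fun i x hx => ?_,
      fun i x hx => ?_, fun i x hx => ?_⟩
    · obtain ⟨hx, hEx⟩ := (memN' _).1 hx
      refine (memN' _).2 ⟨n2 i x hx, fun j => ?_⟩
      have e := congrArg (fun t => ρ t x) (h4 j i)
      simp only [map_sub, map_mul, LinearMap.sub_apply, Module.End.mul_apply] at e
      rw [sub_eq_iff_eq_add] at e
      rw [e]
      refine add_mem ?_ (n2 i _ (hEx j))
      split_ifs
      · rw [map_smul, map_sub, LinearMap.smul_apply, LinearMap.sub_apply]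
        exact N.smul_mem _ (sub_mem (n3 _ _ hx) (n4 _ _ hx))
      · rw [map_zero]; exact zero_mem _
    · obtain ⟨hx, hEx⟩ := (memN' _).1 hx
      refine (memN' _).2 ⟨n3 i x hx, fun j => ?_⟩
      rw [hEK]
      exact N.smul_mem _ (n3 _ _ (hEx j))
    · obtain ⟨hx, hEx⟩ := (memN' _).1 hx
      refine (memN' _).2 ⟨n4 i x hx, fun j => ?_⟩
      have e := congrArg (ρ (((K i)⁻¹ : Uˣ) : U)) (hEK i j (ρ (((K i)⁻¹ : Uˣ) : U) x))
      rw [hKinv', map_smul, hKinv, eq_inv_smul_iff₀ (zpow_ne_zero _ hq0)] at e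
      rw [← e]
      exact N.smul_mem _ (n4 _ _ (hEx j))
  have hNN' : N ≤ N' := sInf_le hN'T
  have hNE : ∀ i, ∀ x ∈ N, ρ (E i) x ∈ N := fun i x hx => ((memN' _).1 (hNN' hx)).2 i
  let S : Subalgebra ℂ U :=
    { carrier := {u | ∀ x ∈ N, ρ u x ∈ N}
      mul_mem' := fun {y z} hy hz x hx => by
        rw [map_mul, Module.End.mul_apply]; exact hy _ (hz x hx)
      add_mem' := fun {y z} hy hz x hx => by
        rw [map_add, LinearMap.add_apply]; exact add_mem (hy _ hx) (hz x hx)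
      algebraMap_mem' := fun r x hx => by
        rw [AlgHom.commutes, Module.algebraMap_end_apply]
        exact N.smul_mem _ hx }
  have hNU : ∀ u : U, ∀ x ∈ N, ρ u x ∈ N := hgen S hNE n2 n3 n4
  have hNM : N ≤ M := sInf_le hMT
  rcases hsimple N hNU with h | h
  · rw [h] at n1
    exact absurd ((Submodule.mem_bot ℂ).1 n1) hv0
  · exact top_le_iff.1 (h ▸ hNM)

theorem Q_contains_generator
    -- the deformation parameter: a transcendental complex number
    (q : ℂ) (hq : Transcendental ℚ q)
    -- Cartan data of the complex semisimple Lie algebra 𝔤 of rank n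
    (n : ℕ) (hn : 0 < n) (a : Fin n → Fin n → ℤ) (d : Fin n → ℕ)
    (ha_diag : ∀ i, a i i = 2) (ha_off : ∀ i j, i ≠ j → a i j ≤ 0)
    (ha_zero : ∀ i j, a i j = 0 ↔ a j i = 0)
    (hd_pos : ∀ i, 0 < d i)
    (ha_symm : ∀ i j, (d i : ℤ) * a i j = (d j : ℤ) * a j i)
    -- the quantised enveloping algebra U = U_q(𝔤): carries elements E i, F i and units K i
    -- satisfying the defining relations, and is universal for these relations
    (U : Type) [Ring U] [Algebra ℂ U]
    (E F : Fin n → U) (K : Fin n → Uˣ)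
    (hrel : UqRels q a d U E F K)
    (hUuniv : ∀ (B : Type) [Ring B] [Algebra ℂ B] (E' F' : Fin n → B) (K' : Fin n → Bˣ),
      UqRels q a d B E' F' K' → ∃! φ : U →ₐ[ℂ] B,
        (∀ i, φ (E i) = E' i) ∧ (∀ i, φ (F i) = F' i) ∧ (∀ i, φ (K i : U) = (K' i : B)))
    -- the Hopf algebra structure of U_q(𝔤)
    (Δ : U →ₐ[ℂ] U ⊗[ℂ] U) (ε : U →ₐ[ℂ] ℂ)
    (hΔE : ∀ i, Δ (E i) = E i ⊗ₜ 1 + (K i : U) ⊗ₜ E i)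
    (hΔF : ∀ i, Δ (F i) = F i ⊗ₜ (((K i)⁻¹ : Uˣ) : U) + 1 ⊗ₜ F i)
    (hΔK : ∀ i, Δ (K i : U) = (K i : U) ⊗ₜ (K i : U))
    (hεE : ∀ i, ε (E i) = 0) (hεF : ∀ i, ε (F i) = 0) (hεK : ∀ i, ε (K i : U) = 1)
    -- the Weyl group W, acting faithfully on the weight lattice P = ℤⁿ (coordinates taken in
    -- the basis of fundamental weights ϖ i), generated by the simple reflections s i, with
    -- longest element w₀ (characterised by: w₀ maps dominant weights to antidominant ones)
    (W : Type) [Group W] [Finite W] (σ : W →* Multiplicative (AddAut (Fin n → ℤ)))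
    (hσinj : Function.Injective σ)
    (s : Fin n → W) (hsgen : Subgroup.closure (Set.range s) = ⊤)
    (hs : ∀ i (μ : Fin n → ℤ), σ (s i) μ = fun k => μ k - μ i * a k i)
    (w₀ : W) (hw₀ : ∀ μ : Fin n → ℤ, (∀ i, 0 ≤ μ i) → ∀ i, σ w₀ μ i ≤ 0)
    -- the simple finite-dimensional modules V(λ) of highest weight λ = ∑ c i ϖ i ∈ P⁺
    (V : (Fin n → ℕ) → Type) [∀ c, AddCommGroup (V c)] [∀ c, Module ℂ (V c)]
    (ρ : ∀ c, U →ₐ[ℂ] Module.End ℂ (V c))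
    (hfd : ∀ c, FiniteDimensional ℂ (V c))
    (hsimple : ∀ c (N : Submodule ℂ (V c)), (∀ (u : U), ∀ v ∈ N, ρ c u v ∈ N) → N = ⊥ ∨ N = ⊤)
    (hhw : ∀ c, ∃ v : V c, v ≠ 0 ∧ v ∈ wtSp q d K (ρ c) (fun i => (c i : ℤ)) ∧
      ∀ i, ρ c (E i) v = 0)
    (hwtsum : ∀ c, (⨆ μ : Fin n → ℤ, wtSp q d K (ρ c) μ) = ⊤)
    (hextremal : ∀ c (w : W),
      Module.finrank ℂ (wtSp q d K (ρ c) (σ w (fun i => (c i : ℤ)))) = 1)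
    -- the quantised coordinate ring A = O_q(G): an algebra of linear forms on U (via the
    -- injection ι into the dual space, multiplication being convolution through Δ),
    -- generated by the coordinate functions cf c ξ v = c^λ_{ξ,v} : u ↦ ξ (u · v)
    (A : Type) [Ring A] [Algebra ℂ A]
    (ι : A →ₗ[ℂ] (U →ₗ[ℂ] ℂ)) (hιinj : Function.Injective ι)
    (hι1 : ι 1 = ε.toLinearMap)
    (hιmul : ∀ x y : A, ι (x * y) =
      (TensorProduct.lid ℂ ℂ).toLinearMap ∘ₗ (TensorProduct.map (ι x) (ι y)) ∘ₗ Δ.toLinearMap)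
    (cf : ∀ c : Fin n → ℕ, Module.Dual ℂ (V c) → V c → A)
    (hcf : ∀ c ξ v u, ι (cf c ξ v) u = ξ (ρ c u v))
    (hAgen : Algebra.adjoin ℂ {x : A | ∃ c ξ v, x = cf c ξ v} = ⊤) :
    -- every Q_{w₊,w₋} with (w₊,w₋) ≠ (w₀,w₀) contains one of the elements
    -- c^{ϖ_i}_{-ϖ_i, w₀ϖ_i} or one of the elements c^{ϖ_i}_{-w₀ϖ_i, ϖ_i}
    ∀ wp wm : W, (wp, wm) ≠ (w₀, w₀) →
      ∃ i : Fin n,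
        (∀ (ξ : Module.Dual ℂ (V (Pi.single i 1))) (v : V (Pi.single i 1)),
          inDualWt q d K (ρ (Pi.single i 1)) (fun k => -((Pi.single i 1 : Fin n → ℕ) k : ℤ)) ξ → ξ ≠ 0 →
          v ∈ wtSp q d K (ρ (Pi.single i 1)) (σ w₀ (fun k => ((Pi.single i 1 : Fin n → ℕ) k : ℤ))) → v ≠ 0 →
          cf (Pi.single i 1) ξ v ∈
            Qplus q d E K ρ σ cf wp ⊔ Qminus q d F K ρ σ w₀ cf wm) ∨
        (∀ (ξ : Module.Dual ℂ (V (Pi.single i 1))) (v : V (Pi.single i 1)),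
          inDualWt q d K (ρ (Pi.single i 1)) (-(σ w₀ (fun k => ((Pi.single i 1 : Fin n → ℕ) k : ℤ)))) ξ → ξ ≠ 0 →
          v ∈ wtSp q d K (ρ (Pi.single i 1)) (fun k => ((Pi.single i 1 : Fin n → ℕ) k : ℤ)) → v ≠ 0 →
          cf (Pi.single i 1) ξ v ∈
            Qplus q d E K ρ σ cf wp ⊔ Qminus q d F K ρ σ w₀ cf wm) := by
  classical
  have hq0 : q ≠ 0 := by
    rintro rfl
    exact hq isAlgebraic_zero
  let ϖ : Fin n → Fin n → ℤ := fun i k => ((Pi.single i 1 : Fin n → ℕ) k : ℤ)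
  have hϖ : ∀ i k, 0 ≤ ϖ i k := fun i k => Int.natCast_nonneg _
  let g : W → (Fin n → ℤ) →+ (Fin n → ℤ) := fun w => (σ w).toAdd.toAddMonoidHom
  have hone : ∀ x, g 1 x = x := by
    intro x
    show σ 1 x = x
    rw [map_one]; rfl
  have hmul : ∀ v w x, g (v * w) x = g v (g w x) := by
    intro v w x
    show σ (v * w) x = σ v (σ w x)
    rw [map_mul]; rfl
  obtain ⟨N, hNinv, hNneg, hN⟩ := exists_invariant_norm a ha_diag W g hone hmul s hs
  -- distinct Weyl group elements differ on some fundamental weight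
  have hext : ∀ w w' : W, w ≠ w' → ∃ i, g w (ϖ i) ≠ g w' (ϖ i) := by
    intro w w' hne
    by_contra! h
    apply hne
    apply hσinj
    have hall : ∀ x, g w x = g w' x := by
      intro x
      have hx : x = ∑ i, x i • ϖ i := by
        funext k
        simp [ϖ, Finset.sum_apply, Pi.single_apply]
      rw [hx, map_sum, map_sum]
      refine Finset.sum_congr rfl fun i _ => ?_
      rw [map_zsmul, map_zsmul, h]
    exact Multiplicative.toAdd.injective (AddEquiv.ext hall)
  have hcone : ∀ β ∈ AddSubmonoid.closure (Set.range fun j : Fin n => fun k => - a k j),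
      -β ∈ AddSubmonoid.closure (Set.range fun j : Fin n => fun k => a k j) := by
    intro β hβ
    induction hβ using AddSubmonoid.closure_induction with
    | mem y hy =>
      obtain ⟨j, rfl⟩ := hy
      refine AddSubmonoid.subset_closure ⟨j, ?_⟩
      funext k
      simp
    | zero => rw [neg_zero]; exact zero_mem _
    | add y z _ _ h1 h2 => rw [neg_add]; exact add_mem h1 h2
  have hgen := Uq_generated q a d U E F K hrel hUuniv
  -- the longest element is an involution
  have hw₀sq : w₀ * w₀ = 1 := by
    by_contra hne
    obtain ⟨i, hi⟩ := hext _ _ hne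
    rw [hone] at hi
    set x := g (w₀ * w₀) (ϖ i) with hx
    have hxdom : ∀ k, 0 ≤ x k := by
      intro k
      have h1 : ∀ k, 0 ≤ (-(g w₀ (ϖ i))) k := by
        intro k
        have := hw₀ (ϖ i) (hϖ i) k
        exact neg_nonneg.2 this
      have h2 : g w₀ (-(g w₀ (ϖ i))) k ≤ 0 := hw₀ _ h1 k
      rw [map_neg, ← hmul, Pi.neg_apply] at h2
      exact neg_nonpos.1 h2
    obtain ⟨v, hv0, hv, hEv⟩ := hhw (Pi.single i 1)
    have htop := iSup_wtSp_below q hq0 a d U E F K hrel hgen (ρ (Pi.single i 1))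
      (hsimple _) (ϖ i) v hv0 hv hEv
    have hx1 := hextremal (Pi.single i 1) (w₀ * w₀)
    change Module.finrank ℂ (wtSp q d K (ρ (Pi.single i 1)) x) = 1 at hx1
    have hmem : ∃ β ∈ AddSubmonoid.closure (Set.range fun j : Fin n => fun k => - a k j),
        ϖ i + β = x := by
      by_contra! hno
      have hind := wtSp_indep hq hd_pos hrel.1 (ρ := ρ (Pi.single i 1)) x
      have htop' : (⨆ (j : Fin n → ℤ) (_ : j ≠ x), wtSp q d K (ρ (Pi.single i 1)) j) = ⊤ := by
        rw [eq_top_iff, ← htop]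
        refine iSup₂_le fun β hβ => ?_
        exact le_iSup₂_of_le (ϖ i + β) (hno β hβ) le_rfl
      have hbot : wtSp q d K (ρ (Pi.single i 1)) x = ⊥ := by
        have := hind
        rw [htop', disjoint_top] at this
        exact this
      rw [hbot, finrank_bot] at hx1
      exact zero_ne_one hx1
    obtain ⟨β, hβ, hβx⟩ := hmem
    have hl : x + -β = ϖ i := by rw [← hβx]; abel
    have := hN x hxdom (-β) (hcone β hβ) (by rw [hl, hx, hNinv])
    rw [this, add_zero] at hl
    exact hi hl
  obtain ⟨hKK, hKE, hKF, -⟩ := hrel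
  intro wp wm hne
  by_cases hp : wp = w₀
  · -- the minus case
    have hm : wm ≠ w₀ := by
      rintro rfl
      exact hne (by rw [hp])
    have hm1 : wm * w₀ ≠ 1 := by
      intro h
      apply hm
      exact mul_right_cancel (h.trans hw₀sq.symm)
    obtain ⟨i, hi⟩ := hext _ _ hm1
    rw [hone] at hi
    refine ⟨i, Or.inl fun ξ v hξ _ hv _ => ?_⟩
    refine (le_sup_right : Qminus q d F K ρ σ w₀ cf wm ≤ _) ?_
    refine TwoSidedIdeal.subset_span ⟨i, ξ, v, hv, fun y hy => ?_, rfl⟩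
    have hy' := demazure_le hq0 F (fun j k => - a k j) (fun j k => by
      rw [hKF k j]; congr 2; ring) hy
    suffices h : (⨆ β ∈ AddSubmonoid.closure (Set.range fun j : Fin n => fun k => - a k j),
        wtSp q d K (ρ (Pi.single i 1)) (g (wm * w₀) (ϖ i) + β)) ≤ LinearMap.ker ξ from h hy'
    refine iSup₂_le fun β hβ z hz => ?_
    refine hξ _ (fun heq => ?_) z hz
    have heq' : g (wm * w₀) (ϖ i) + β = ϖ i := by
      rw [heq]; funext k; simp [ϖ]
    have hl : ϖ i + -β = g (wm * w₀) (ϖ i) := by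
      rw [add_neg_eq_iff_eq_add]; exact heq'.symm
    have := hN (ϖ i) (hϖ i) (-β) (hcone β hβ) (by rw [hl, hNinv])
    rw [this, add_zero] at hl
    exact hi hl.symm
  · -- the plus case
    obtain ⟨i, hi⟩ := hext _ _ hp
    refine ⟨i, Or.inr fun ξ v hξ _ hv _ => ?_⟩
    refine (le_sup_left : Qplus q d E K ρ σ cf wp ≤ _) ?_
    refine TwoSidedIdeal.subset_span ⟨i, ξ, v, hv, fun y hy => ?_, rfl⟩
    have hy' := demazure_le hq0 E (fun j k => a k j) (fun j k => by
      rw [hKE k j]; congr 2; ring) hy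
    suffices h : (⨆ β ∈ AddSubmonoid.closure (Set.range fun j : Fin n => fun k => a k j),
        wtSp q d K (ρ (Pi.single i 1)) (g wp (ϖ i) + β)) ≤ LinearMap.ker ξ from h hy'
    refine iSup₂_le fun β hβ z hz => ?_
    refine hξ _ (fun heq => ?_) z hz
    have heq' : g wp (ϖ i) + β = g w₀ (ϖ i) := by
      rw [heq, neg_neg]; rfl
    have hdom : ∀ k, 0 ≤ (-(g w₀ (ϖ i))) k := by
      intro k
      have := hw₀ (ϖ i) (hϖ i) k
      exact neg_nonneg.2 this
    have hl : -(g w₀ (ϖ i)) + β = -(g wp (ϖ i)) := by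
      rw [← heq']; abel
    have h0 := hN _ hdom β hβ (by rw [hl, hNneg, hNneg, hNinv, hNinv])
    rw [h0, add_zero] at heq'
    exact hi heq'
end

section
/- Let j ∈ {1,…,n} and let u be a nonzero vector of the lowest weight w_0ϖ_j in the simple module V(ϖ_j). If i ∈ {1,…,n} is such that E_i·u ≠ 0, then w_0 α_i = −α_j, and E_i·u is a nonzero scalar multiple of a vector of weight w_0 s_j ϖ_j (whose weight space is one-dimensional). -/
open scoped TensorProduct

namespace LWR

/-- The root `∑ b i α i` in fundamental-weight coordinates. -/
def rt {n : ℕ} (a : Fin n → Fin n → ℤ) (b : Fin n → ℤ) : Fin n → ℤ :=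
  fun k => ∑ i, a k i * b i

/-- The pairing of the root `∑ b i α i` with a weight. -/
def pr {n : ℕ} (d : Fin n → ℕ) (b μ : Fin n → ℤ) : ℤ := ∑ i, b i * (d i : ℤ) * μ i

lemma rt_add {n : ℕ} (a : Fin n → Fin n → ℤ) (b c : Fin n → ℤ) :
    rt a (b + c) = rt a b + rt a c := by
  funext k; simp [rt, mul_add, Finset.sum_add_distrib]

lemma rt_sub {n : ℕ} (a : Fin n → Fin n → ℤ) (b c : Fin n → ℤ) :
    rt a (b - c) = rt a b - rt a c := by
  funext k; simp [rt, mul_sub, Finset.sum_sub_distrib]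

lemma rt_single {n : ℕ} (a : Fin n → Fin n → ℤ) (i : Fin n) (t : ℤ) :
    rt a (Pi.single i t) = fun k => a k i * t := by
  funext k; simp [rt, Pi.single_apply]

lemma rt_sum {n : ℕ} (a : Fin n → Fin n → ℤ) (b : Fin n → Fin n → ℤ) :
    rt a (∑ j, b j) = ∑ j, rt a (b j) := by
  funext k
  simp only [rt, Finset.sum_apply, Finset.mul_sum]
  rw [Finset.sum_comm]

lemma pr_sub_left {n : ℕ} (d : Fin n → ℕ) (b c μ : Fin n → ℤ) :
    pr d (b - c) μ = pr d b μ - pr d c μ := by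
  simp [pr, sub_mul, Finset.sum_sub_distrib]

lemma pr_sub_right {n : ℕ} (d : Fin n → ℕ) (b μ ν : Fin n → ℤ) :
    pr d b (μ - ν) = pr d b μ - pr d b ν := by
  simp [pr, mul_sub, Finset.sum_sub_distrib]

lemma pr_single_left {n : ℕ} (d : Fin n → ℕ) (i : Fin n) (t : ℤ) (μ : Fin n → ℤ) :
    pr d (Pi.single i t) μ = t * d i * μ i := by
  simp [pr, Pi.single_apply]

lemma pr_single_right {n : ℕ} (d : Fin n → ℕ) (i : Fin n) (t : ℤ) (b : Fin n → ℤ) :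
    pr d b (Pi.single i t) = b i * d i * t := by
  simp [pr, Pi.single_apply]

lemma pr_root {n : ℕ} (a : Fin n → Fin n → ℤ) (d : Fin n → ℕ)
    (ha_symm : ∀ i j, (d i : ℤ) * a i j = (d j : ℤ) * a j i) (b : Fin n → ℤ) (k : Fin n) (t : ℤ) :
    pr d b (fun l => t * a l k) = t * (d k * rt a b k) := by
  simp only [pr, rt, Finset.mul_sum]
  refine Finset.sum_congr rfl fun i _ => ?_
  linear_combination (b i * t) * ha_symm i k

/-- Every property closed under products and generators holds on all of a finite group. -/
lemma gen_ind {W : Type} [Group W] [Finite W] {n : ℕ} (s : Fin n → W)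
    (hsgen : Subgroup.closure (Set.range s) = ⊤) (p : W → Prop) (h1 : p 1)
    (hmul : ∀ i w, p w → p (s i * w)) (w : W) : p w := by
  have hw : w ∈ Submonoid.closure (Set.range s) := by
    rw [← Subgroup.closure_toSubmonoid_of_finite, hsgen]; trivial
  induction hw using Submonoid.closure_induction_left with
  | one => exact h1
  | mul_left x hx y hy ih => obtain ⟨i, rfl⟩ := hx; exact hmul i y ih

section root
variable {n : ℕ} (a : Fin n → Fin n → ℤ) (d : Fin n → ℕ)
    (ha_diag : ∀ i, a i i = 2)
    (hd_pos : ∀ i, 0 < d i)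
    (ha_symm : ∀ i j, (d i : ℤ) * a i j = (d j : ℤ) * a j i)
    {W : Type} [Group W] [Finite W] (g : W → (Fin n → ℤ) → (Fin n → ℤ))
    (g1 : ∀ μ, g 1 μ = μ) (gmul : ∀ w w' μ, g (w * w') μ = g w (g w' μ))
    (gadd : ∀ w μ ν, g w (μ + ν) = g w μ + g w ν)
    (s : Fin n → W) (hsgen : Subgroup.closure (Set.range s) = ⊤)
    (hs : ∀ i (μ : Fin n → ℤ), g (s i) μ = fun k => μ k - μ i * a k i)
    (w₀ : W) (hw₀ : ∀ μ : Fin n → ℤ, (∀ i, 0 ≤ μ i) → ∀ i, g w₀ μ i ≤ 0)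

include ha_diag ha_symm g1 gmul hsgen hs in
lemma lift (w : W) : ∀ b, ∃ b', g w (rt a b) = rt a b' ∧ ∀ μ, pr d b' (g w μ) = pr d b μ := by
  refine gen_ind s hsgen (fun w => ∀ b, ∃ b', g w (rt a b) = rt a b' ∧
    ∀ μ, pr d b' (g w μ) = pr d b μ) ?_ ?_ w
  · intro b; exact ⟨b, by rw [g1], by simp [g1]⟩
  · intro k w ih b
    obtain ⟨b', h1, h2⟩ := ih b
    refine ⟨b' - Pi.single k (rt a b' k), ?_, ?_⟩
    · rw [gmul, h1, hs, rt_sub, rt_single]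
      funext l; simp [mul_comm]
    · intro μ
      rw [gmul, ← h2]
      generalize g w μ = ν
      rw [hs]
      have : (fun l => ν l - ν k * a l k) = ν - fun l => ν k * a l k := rfl
      rw [this, pr_sub_right, pr_sub_left, pr_sub_left, pr_root a d ha_symm, pr_single_left,
        pr_single_left]
      rw [ha_diag]; ring

include hd_pos ha_symm g1 gmul hsgen hs hw₀ in
lemma rt_inj_nonneg (b : Fin n → ℤ) (hb : ∀ i, 0 ≤ b i) (h : rt a b = 0) : b = 0 := by
  have inv : ∀ w μ, pr d b (g w μ) = pr d b μ := by
    intro w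
    refine gen_ind s hsgen (fun w => ∀ μ, pr d b (g w μ) = pr d b μ) ?_ ?_ w
    · intro μ; rw [g1]
    · intro k w ih μ
      rw [gmul, ← ih μ, hs]
      generalize g w μ = ν
      have : (fun l => ν l - ν k * a l k) = ν - fun l => ν k * a l k := rfl
      rw [this, pr_sub_right, pr_root a d ha_symm, h]; simp
  funext i
  have h1 := inv w₀ (Pi.single i 1)
  rw [pr_single_right] at h1
  have h2 : pr d b (g w₀ (Pi.single i 1)) ≤ 0 := by
    apply Finset.sum_nonpos
    intro k _
    refine mul_nonpos_of_nonneg_of_nonpos (mul_nonneg (hb k) (by positivity)) (hw₀ _ ?_ k)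
    intro l; by_cases hl : l = i <;> simp [hl]
  have h3 := hd_pos i
  have h4 := hb i
  have h5 : b i * d i ≤ 0 := by linarith
  have : (0:ℤ) < d i := by exact_mod_cast h3
  simp only [Pi.zero_apply]
  nlinarith

lemma single_nonneg (i : Fin n) : ∀ k, (0:ℤ) ≤ (Pi.single i 1 : Fin n → ℤ) k := by
  intro l; by_cases hl : l = i <;> simp [hl]

include g1 gmul gadd hw₀ in
lemma perm : ∃ π : Fin n → Fin n, Function.Injective π ∧
    ∀ j, g w₀ (Pi.single j 1) = - Pi.single (π j) 1 := by
  have g0 : ∀ w, g w 0 = 0 := by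
    intro w; have := gadd w 0 0; simpa using this
  have gneg : ∀ w μ, g w (-μ) = - g w μ := by
    intro w μ
    have := gadd w (-μ) μ
    rw [neg_add_cancel, g0] at this
    exact eq_neg_of_add_eq_zero_left this.symm
  have ginj : ∀ w, Function.Injective (g w) := by
    intro w x y h
    have : g w⁻¹ (g w x) = g w⁻¹ (g w y) := by rw [h]
    rwa [← gmul, ← gmul, inv_mul_cancel, g1, g1] at this
  have hodd : ∀ (m : ℕ) (μ : Fin n → ℤ), (∀ i, 0 ≤ μ i) → ∀ i, g (w₀ ^ (2 * m + 1)) μ i ≤ 0 := by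
    intro m
    induction m with
    | zero => simpa using hw₀
    | succ m ih =>
      intro μ hμ i
      have e : w₀ ^ (2 * (m + 1) + 1) = w₀ * (w₀ * w₀ ^ (2 * m + 1)) := by
        rw [← pow_succ', ← pow_succ']; congr 1
      rw [e, gmul, gmul]
      have h1 : g w₀ (g w₀ (g (w₀ ^ (2 * m + 1)) μ)) = 
          g w₀ (- g w₀ (- g (w₀ ^ (2 * m + 1)) μ)) := by
        rw [gneg w₀ (g (w₀ ^ (2 * m + 1)) μ), neg_neg]
      rw [h1]
      apply hw₀
      intro k
      have := hw₀ (- g (w₀ ^ (2 * m + 1)) μ) (fun l => by simpa using ih μ hμ l) k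
      simpa using this
  have hinv : ∀ (μ : Fin n → ℤ), (∀ i, 0 ≤ μ i) → ∀ i, g w₀⁻¹ μ i ≤ 0 := by
    have hN := orderOf_pos w₀
    obtain ⟨m, hm⟩ : ∃ m, orderOf w₀ = m + 1 := ⟨orderOf w₀ - 1, by omega⟩
    have e : w₀⁻¹ = w₀ ^ (2 * m + 1) := by
      rw [inv_eq_iff_mul_eq_one, ← pow_succ', show 2 * m + 1 + 1 = orderOf w₀ * 2 by omega,
        pow_mul, pow_orderOf_eq_one, one_pow]
    rw [e]; exact hodd m
  have key : ∀ j, ∃ k, g w₀ (Pi.single j 1) = - Pi.single k 1 := by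
    intro j
    set x := g w₀ (Pi.single j 1) with hx
    have hx0 : ∀ i, x i ≤ 0 := hw₀ _ (single_nonneg j)
    have hxne : x ≠ 0 := by
      intro h
      rw [hx, ← g0 w₀] at h
      have := congrFun (ginj _ h) j
      simp at this
    obtain ⟨k, hk⟩ := Function.ne_iff.mp hxne
    have hk' : x k ≤ -1 := by have := hx0 k; simp at hk; omega
    have hback : g w₀⁻¹ x = Pi.single j 1 := by rw [hx, ← gmul, inv_mul_cancel, g1]
    -- r = -x - ϖ_k
    have hr : ∀ i, 0 ≤ (-x - Pi.single k 1 : Fin n → ℤ) i := by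
      intro i
      by_cases h : i = k
      · subst h; simp; omega
      · simp [h]; exact hx0 i
    have h1 := hinv _ hr
    have h2 := hinv _ (single_nonneg k)
    have h3 : g w₀⁻¹ (Pi.single k 1) + g w₀⁻¹ (-x - Pi.single k 1) = - Pi.single j 1 := by
      rw [← gadd, add_sub_cancel, gneg, hback]
    have h4 : ∀ i, (g w₀⁻¹ (Pi.single k 1)) i + g w₀⁻¹ (-x - Pi.single k 1) i
        = - (Pi.single j 1 : Fin n → ℤ) i := fun i => congrFun h3 i
    have h5 : g w₀⁻¹ (Pi.single k 1) = - Pi.single j 1 := by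
      have off : ∀ i, i ≠ j → g w₀⁻¹ (Pi.single k 1) i = 0 := by
        intro i hi
        have := h4 i; have := h1 i; have := h2 i
        simp [hi] at *; omega
      funext i
      by_cases hi : i = j
      · subst hi
        have a1 := h4 i; have a2 := h1 i; have a3 := h2 i
        simp only [Pi.single_eq_same, Pi.neg_apply] at *
        by_contra hne
        have z : g w₀⁻¹ (Pi.single k 1) i = 0 := by omega
        have : g w₀⁻¹ (Pi.single k 1) = g w₀⁻¹ 0 := by
          rw [g0]; funext l
          by_cases hl : l = i
          · subst hl; exact z
          · exact off l hl
        have := congrFun (ginj _ this) k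
        simp at this
      · rw [off i hi]; simp [hi]
    refine ⟨k, ?_⟩
    have h6 : Pi.single j 1 = - g w₀⁻¹ (Pi.single k 1) := by rw [h5, neg_neg]
    rw [hx, h6, gneg, ← gmul, mul_inv_cancel, g1]
  choose π hπ using key
  refine ⟨π, ?_, hπ⟩
  intro i j h
  have : g w₀ (Pi.single i 1) = g w₀ (Pi.single j 1) := by rw [hπ, hπ, h]
  have := congrFun (ginj _ this) i
  by_contra hne
  simp [hne] at this

include ha_diag hd_pos ha_symm g1 gmul hsgen hs in
lemma w0_root (π : Fin n → Fin n) (hinj : Function.Injective π)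
    (hπ : ∀ j, g w₀ (Pi.single j 1) = - Pi.single (π j) 1) (i : Fin n) :
    g w₀ (fun k => a k i) = fun k => - a k (π i) := by
  have hbij : Function.Bijective π := Finite.injective_iff_bijective.mp hinj
  have key : ∀ i, ∃ b : Fin n → ℤ, g w₀ (fun k => a k i) = rt a b ∧
      b (π i) * d (π i) = - (d i : ℤ) ∧ ∀ k, k ≠ π i → b k = 0 := by
    intro i
    obtain ⟨b, h1, h2⟩ := lift a d ha_diag ha_symm g g1 gmul s hsgen hs w₀ (Pi.single i 1)
    rw [rt_single] at h1
    refine ⟨b, by simpa using h1, ?_, ?_⟩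
    · have := h2 (Pi.single i 1)
      rw [hπ, pr_single_left, ← Pi.single_neg, pr_single_right] at this
      simp at this; linarith
    · intro k hk
      obtain ⟨l, rfl⟩ := hbij.2 k
      have hl : i ≠ l := fun h => hk (by rw [h])
      have := h2 (Pi.single l 1)
      rw [hπ, pr_single_left, ← Pi.single_neg, pr_single_right] at this
      have hd := hd_pos (π l)
      simp [hl] at this
      omega
  choose b hb1 hb2 hb3 using key
  have hle : ∀ i, d (π i) ≤ d i := by
    intro i
    apply Nat.le_of_dvd (hd_pos i)
    have : (d (π i) : ℤ) ∣ d i := ⟨- b i (π i), by have := hb2 i; linarith⟩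
    exact_mod_cast this
  have hsum : ∑ i, d (π i) = ∑ i, d i := Function.Bijective.sum_comp hbij d
  have heq : d (π i) = d i := (Finset.sum_eq_sum_iff_of_le (fun i _ => hle i)).mp hsum i (by simp)
  have hb : b i = Pi.single (π i) (-1) := by
    funext k
    by_cases hk : k = π i
    · subst hk
      have h := hb2 i
      rw [heq] at h
      have hd := hd_pos i
      have : (d i : ℤ) ≠ 0 := by positivity
      simp only [Pi.single_eq_same]
      apply mul_right_cancel₀ this
      linarith
    · rw [hb3 i k hk]; simp [hk]
  rw [hb1 i, hb, rt_single]; simp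

end root

section modules

lemma q_ne_zero {q : ℂ} (hq : Transcendental ℚ q) : q ≠ 0 := by
  rintro rfl; exact hq isAlgebraic_zero

lemma q_zpow_ne_one {q : ℂ} (hq : Transcendental ℚ q) (k : ℤ) (hk : k ≠ 0) : q ^ k ≠ 1 := by
  have nat : ∀ m : ℕ, 0 < m → q ^ m ≠ 1 := by
    intro m hm h
    exact hq (IsAlgebraic.of_pow hm (by rw [h]; exact isAlgebraic_one))
  intro h
  rcases Int.eq_nat_or_neg k with ⟨m, rfl | rfl⟩
  · rw [zpow_natCast] at h; exact nat m (by omega) h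
  · rw [zpow_neg, zpow_natCast, inv_eq_one] at h; exact nat m (by omega) h

lemma zpow_inj {Q : ℂ} (hQ0 : Q ≠ 0) (hQ : ∀ k : ℤ, k ≠ 0 → Q ^ k ≠ 1) {x y : ℤ}
    (h : Q ^ x = Q ^ y) : x = y := by
  by_contra hne
  apply hQ (x - y) (by omega)
  rw [zpow_sub₀ hQ0, h, div_self (zpow_ne_zero _ hQ0)]

/-- The quantum integer. -/
noncomputable def qi (Q : ℂ) (k : ℤ) : ℂ := (Q - Q⁻¹)⁻¹ * (Q ^ k - Q ^ (-k))

lemma qi_ne_zero {Q : ℂ} (hQ0 : Q ≠ 0) (hQ : ∀ k : ℤ, k ≠ 0 → Q ^ k ≠ 1) {k : ℤ} (hk : k ≠ 0) :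
    qi Q k ≠ 0 := by
  refine mul_ne_zero (inv_ne_zero ?_) ?_
  · intro h
    have : Q ^ (1 : ℤ) = Q ^ (-1 : ℤ) := by rw [zpow_one, zpow_neg_one]; exact sub_eq_zero.mp h
    have := zpow_inj hQ0 hQ this
    omega
  · intro h
    have := zpow_inj hQ0 hQ (sub_eq_zero.mp h)
    omega

lemma qi_ident {Q : ℂ} (hQ0 : Q ≠ 0) (hQ : ∀ k : ℤ, k ≠ 0 → Q ^ k ≠ 1) (M k : ℤ) :
    qi Q k * qi Q (M - k + 1) + qi Q (M - 2 * k) = qi Q (k + 1) * qi Q (M - k) := by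
  have h1 : Q - Q⁻¹ ≠ 0 := by
    intro h
    have : Q ^ (1 : ℤ) = Q ^ (-1 : ℤ) := by rw [zpow_one, zpow_neg_one]; exact sub_eq_zero.mp h
    have := zpow_inj hQ0 hQ this
    omega
  have key : (Q ^ k - Q ^ (-k)) * (Q ^ (M - k + 1) - Q ^ (-(M - k + 1))) +
      (Q - Q⁻¹) * (Q ^ (M - 2 * k) - Q ^ (-(M - 2 * k))) =
      (Q ^ (k + 1) - Q ^ (-(k + 1))) * (Q ^ (M - k) - Q ^ (-(M - k))) := by
    have hX : Q ^ k ≠ 0 := zpow_ne_zero _ hQ0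
    have hY : Q ^ M ≠ 0 := zpow_ne_zero _ hQ0
    simp only [zpow_neg, zpow_add₀ hQ0, zpow_sub₀ hQ0, zpow_one, two_mul]
    generalize Q ^ k = X at *
    generalize Q ^ M = Y at *
    field_simp
    ring
  unfold qi
  have h2 : (Q - Q⁻¹)⁻¹ * (Q - Q⁻¹) = 1 := inv_mul_cancel₀ h1
  linear_combination ((Q - Q⁻¹)⁻¹) ^ 2 * key -
    ((Q - Q⁻¹)⁻¹ * (Q ^ (M - 2 * k) - Q ^ (-(M - 2 * k)))) * h2

lemma sl2 {V : Type} [AddCommGroup V] [Module ℂ V] (e f : V →ₗ[ℂ] V) (h : ℤ → Submodule ℂ V)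
    {Q : ℂ} (hQ0 : Q ≠ 0) (hQ : ∀ k : ℤ, k ≠ 0 → Q ^ k ≠ 1) (m : ℤ) (hm : 0 ≤ m)
    (he : ∀ t, ∀ x ∈ h t, e x ∈ h (t + 1)) (hf : ∀ t, ∀ x ∈ h t, f x ∈ h (t - 1))
    (hef : ∀ t, ∀ x ∈ h t, e (f x) - f (e x) = qi Q (m + 2 * t) • x)
    (hT : ∃ T : ℕ, ∀ t : ℤ, T ≤ t → h t = ⊥) (h0 : h 0 ≠ ⊥) : h (-m) ≠ ⊥ := by
  obtain ⟨y, hy, hy0⟩ := Submodule.exists_mem_ne_zero_of_ne_bot h0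
  have hep : ∀ p : ℕ, (e ^ p) y ∈ h p := by
    intro p
    induction p with
    | zero => simpa using hy
    | succ p ih => rw [pow_succ']; exact_mod_cast he _ _ ih
  obtain ⟨T, hT⟩ := hT
  obtain ⟨p, hp1, hp2⟩ : ∃ p : ℕ, (e ^ p) y ≠ 0 ∧ (e ^ (p + 1)) y = 0 := by
    by_contra hcon
    push Not at hcon
    have : ∀ p : ℕ, (e ^ p) y ≠ 0 := by
      intro p
      induction p with
      | zero => simpa using hy0
      | succ p ih => exact hcon p ih
    apply this T
    have := hep T
    rw [hT T le_rfl] at this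
    simpa using this
  set z := (e ^ p) y with hz
  have hzp : z ∈ h p := hep p
  have hez : e z = 0 := by rw [pow_succ'] at hp2; exact hp2
  have hfk : ∀ k : ℕ, (f ^ k) z ∈ h (p - k) := by
    intro k
    induction k with
    | zero => simpa using hzp
    | succ k ih =>
      rw [pow_succ']
      have := hf _ _ ih
      rwa [show (p : ℤ) - k - 1 = p - ((k + 1 : ℕ) : ℤ) by push_cast; ring] at this
  have hmain : ∀ k : ℕ, e ((f ^ (k + 1)) z) =
      (qi Q (k + 1) * qi Q (m + 2 * p - k)) • (f ^ k) z := by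
    intro k
    induction k with
    | zero =>
      have := hef p z hzp
      rw [hez, map_zero, sub_zero] at this
      have h1 : qi Q 1 = 1 := by
        have h2 := qi_ne_zero hQ0 hQ (k := 1) one_ne_zero
        unfold qi at h2 ⊢
        simp only [zpow_one, zpow_neg] at h2 ⊢
        exact inv_mul_cancel₀ (left_ne_zero_of_mul h2 |> inv_ne_zero |> fun h => by simpa using h)
      simp [this, h1]
    | succ k ih =>
      have h1 := hef _ _ (hfk (k + 1))
      have h2 : (f ^ (k + 1 + 1)) z = f ((f ^ (k + 1)) z) := by
        rw [pow_succ' f (k + 1)]; rfl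
      have h3 : (f ^ (k + 1)) z = f ((f ^ k) z) := by
        rw [pow_succ' f k]; rfl
      rw [h2, eq_add_of_sub_eq h1, ih, map_smul, ← h3, ← add_smul]
      congr 1
      have := qi_ident hQ0 hQ (m + 2 * p) (k + 1)
      push_cast
      rw [← this, add_comm]
      congr 2
      · congr 1; ring
      · ring
  have hne : ∀ k : ℕ, (k : ℤ) ≤ m + 2 * p → (f ^ k) z ≠ 0 := by
    intro k
    induction k with
    | zero => intro _; simpa using hp1
    | succ k ih =>
      intro hk hcon
      have h1 := hmain k
      rw [hcon, map_zero] at h1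
      refine smul_ne_zero (mul_ne_zero ?_ ?_) (ih (by push_cast at hk; omega)) h1.symm
      · exact qi_ne_zero hQ0 hQ (by omega)
      · exact qi_ne_zero hQ0 hQ (by push_cast at hk; omega)
  have hfin := hne (m.toNat + p) (by push_cast; rw [Int.toNat_of_nonneg hm]; omega)
  have hmem := hfk (m.toNat + p)
  have : (p : ℤ) - ((m.toNat + p : ℕ) : ℤ) = -m := by
    push_cast; rw [Int.toNat_of_nonneg hm]; ring
  rw [this] at hmem
  exact (Submodule.ne_bot_iff _).mpr ⟨_, hmem, hfin⟩

/-- Words in the lowering operators applied to a fixed vector. -/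
inductive Wd {n : ℕ} {V : Type} (f : Fin n → V → V) (v : V) : (Fin n → ℤ) → V → Prop
  | base : Wd f v 0 v
  | step (i : Fin n) (b : Fin n → ℤ) (x : V) : Wd f v b x → Wd f v (b + Pi.single i 1) (f i x)

lemma Wd.nonneg {n : ℕ} {V : Type} {f : Fin n → V → V} {v : V} {b : Fin n → ℤ} {x : V}
    (h : Wd f v b x) : ∀ i, 0 ≤ b i := by
  induction h with
  | base => simp
  | step i b x _ ih => intro k; exact add_nonneg (ih k) (single_nonneg i k)

variable {q : ℂ} (hq : Transcendental ℚ q) {n : ℕ} {a : Fin n → Fin n → ℤ} {d : Fin n → ℕ}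
    (hd_pos : ∀ i, 0 < d i)
    {U : Type} [Ring U] [Algebra ℂ U]
    {E F : Fin n → U} {K : Fin n → Uˣ}
    (hrel : UqRels q a d U E F K)
    (hUuniv : ∀ (B : Type) [Ring B] [Algebra ℂ B] (E' F' : Fin n → B) (K' : Fin n → Bˣ),
      UqRels q a d B E' F' K' → ∃! φ : U →ₐ[ℂ] B,
        (∀ i, φ (E i) = E' i) ∧ (∀ i, φ (F i) = F' i) ∧ (∀ i, φ (K i : U) = (K' i : B)))
    {V : Type} [AddCommGroup V] [Module ℂ V] (ρ : U →ₐ[ℂ] Module.End ℂ V)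

include hrel hUuniv in
lemma generate (S : Subalgebra ℂ U) (hE : ∀ i, E i ∈ S) (hF : ∀ i, F i ∈ S)
    (hK : ∀ i, (K i : U) ∈ S) (hKi : ∀ i, (((K i)⁻¹ : Uˣ) : U) ∈ S) (u : U) : u ∈ S := by
  let E' : Fin n → S := fun i => ⟨E i, hE i⟩
  let F' : Fin n → S := fun i => ⟨F i, hF i⟩
  let K' : Fin n → Sˣ := fun i => ⟨⟨K i, hK i⟩, ⟨_, hKi i⟩, by ext; simp, by ext; simp⟩
  have hrel' : UqRels q a d S E' F' K' := by
    obtain ⟨h1, h2, h3, h4, h5, h6⟩ := hrel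
    refine ⟨?_, ?_, ?_, ?_, ?_, ?_⟩
    · intro i j; ext; exact h1 i j
    · intro i j; ext; exact h2 i j
    · intro i j; ext; exact h3 i j
    · intro i j; ext
      have := h4 i j
      split_ifs with h
      · rw [if_pos h] at this; exact this
      · rw [if_neg h] at this; exact this
    · intro i j hij; ext
      have := h5 i j hij
      simpa [E'] using this
    · intro i j hij; ext
      have := h6 i j hij
      simpa [F'] using this
  obtain ⟨φ, ⟨p1, p2, p3⟩, -⟩ := hUuniv S E' F' K' hrel'
  have huniq := (hUuniv U E F K hrel).unique (y₁ := S.val.comp φ) (y₂ := AlgHom.id ℂ U)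
    ⟨fun i => by simp [p1, E'], fun i => by simp [p2, F'], fun i => by simp [p3, K']⟩
    ⟨fun i => rfl, fun i => rfl, fun i => rfl⟩
  have := congrArg (fun ψ : U →ₐ[ℂ] U => ψ u) huniq
  simp only [AlgHom.id_apply] at this
  rw [← this]
  exact (φ u).2

lemma mem_wt {μ : Fin n → ℤ} {x : V} :
    x ∈ wtSp q d K ρ μ ↔ ∀ i, ρ (K i : U) x = q ^ (μ i * (d i : ℤ)) • x := by
  simp [wtSp, Submodule.mem_iInf, sub_eq_zero]

include hq in
lemma Kinv_wt {μ : Fin n → ℤ} {x : V} (hx : x ∈ wtSp q d K ρ μ) (i : Fin n) :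
    ρ (((K i)⁻¹ : Uˣ) : U) x = q ^ (-(μ i * (d i : ℤ))) • x := by
  have h := (mem_wt ρ).mp hx i
  have h2 : ρ (((K i)⁻¹ : Uˣ) : U) (ρ (K i : U) x) = x := by
    rw [← Module.End.mul_apply, ← map_mul, Units.inv_mul, map_one]; rfl
  rw [h, map_smul] at h2
  rw [zpow_neg]
  exact (eq_inv_smul_iff₀ (zpow_ne_zero _ (q_ne_zero hq))).mpr h2

include hq hrel in
lemma E_wt {μ : Fin n → ℤ} {x : V} (hx : x ∈ wtSp q d K ρ μ) (i : Fin n) :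
    ρ (E i) x ∈ wtSp q d K ρ (μ + fun k => a k i) := by
  rw [mem_wt] at hx ⊢
  intro k
  rw [← Module.End.mul_apply, ← map_mul, hrel.2.1 k i, map_smul, map_mul, LinearMap.smul_apply,
    Module.End.mul_apply, hx k, map_smul, smul_smul, ← zpow_add₀ (q_ne_zero hq)]
  congr 2
  simp; ring

include hq hrel in
lemma F_wt {μ : Fin n → ℤ} {x : V} (hx : x ∈ wtSp q d K ρ μ) (i : Fin n) :
    ρ (F i) x ∈ wtSp q d K ρ (μ - fun k => a k i) := by
  rw [mem_wt] at hx ⊢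
  intro k
  rw [← Module.End.mul_apply, ← map_mul, hrel.2.2.1 k i, map_smul, map_mul, LinearMap.smul_apply,
    Module.End.mul_apply, hx k, map_smul, smul_smul, ← zpow_add₀ (q_ne_zero hq)]
  congr 2
  simp; ring

include hq hrel in
lemma EF_wt {μ : Fin n → ℤ} {x : V} (hx : x ∈ wtSp q d K ρ μ) (i k : Fin n) :
    ρ (E i) (ρ (F k) x) - ρ (F k) (ρ (E i) x) =
      if i = k then qi (q ^ (d i : ℤ)) (μ i) • x else 0 := by
  have h := congrArg (fun u => ρ u x) (hrel.2.2.2.1 i k)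
  simp only [map_sub, map_mul, LinearMap.sub_apply, Module.End.mul_apply] at h
  rw [h]
  split_ifs with hik
  · rw [map_smul, map_sub, LinearMap.smul_apply, LinearMap.sub_apply, (mem_wt ρ).mp hx i,
      Kinv_wt hq ρ hx i, ← sub_smul, smul_smul]
    unfold qi
    congr 3
    · rw [zpow_neg]
    · rw [← zpow_mul, mul_comm]
    · rw [← zpow_mul]; congr 1; ring
  · simp

include hq hd_pos hrel in
lemma wt_indep : iSupIndep (fun μ : Fin n → ℤ => wtSp q d K ρ μ) := by
  have hcomm : ∀ i j : Fin n, Commute (ρ (K i : U)) (ρ (K j : U)) := by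
    intro i j
    change _ * _ = _ * _
    rw [← map_mul, ← map_mul, hrel.1 i j]
  have h := Module.End.independent_iInf_maxGenEigenspace_of_forall_mapsTo
    (fun i : Fin n => ρ (K i : U))
    (fun i j φ => Module.End.mapsTo_maxGenEigenspace_of_comm (hcomm j i) φ)
  have hinj : Function.Injective
      (fun (μ : Fin n → ℤ) (i : Fin n) => q ^ (μ i * (d i : ℤ))) := by
    intro μ ν hμν
    funext i
    have := zpow_inj (q_ne_zero hq) (q_zpow_ne_one hq) (congrFun hμν i)
    have hd : (d i : ℤ) ≠ 0 := by have := hd_pos i; omega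
    exact mul_right_cancel₀ hd this
  refine (h.comp hinj).mono ?_
  intro μ
  refine iInf_mono fun i => ?_
  intro x hx
  rw [Module.End.mem_maxGenEigenspace]
  exact ⟨1, by rw [pow_one]; exact hx⟩

include hq hd_pos hrel in
lemma wt_bdd [FiniteDimensional ℂ V] (μ α : Fin n → ℤ) (hα : α ≠ 0) :
    ∃ T : ℕ, ∀ t : ℤ, T ≤ t → wtSp q d K ρ (μ + t • α) = ⊥ := by
  have hfin := WellFoundedGT.finite_ne_bot_of_iSupIndep (wt_indep hq hd_pos hrel ρ)
  obtain ⟨k, hk⟩ := Function.ne_iff.mp hα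
  have hinj : Function.Injective (fun t : ℤ => μ + t • α) := by
    intro t t' h
    have := congrFun h k
    simp only [Pi.add_apply, Pi.smul_apply, smul_eq_mul, add_right_inj] at this
    exact mul_right_cancel₀ hk this
  have hfin2 := hfin.preimage (f := fun t : ℤ => μ + t • α) hinj.injOn
  obtain ⟨B, hB⟩ := hfin2.bddAbove
  refine ⟨B.toNat + 1, fun t ht => ?_⟩
  by_contra hne
  have : t ≤ B := hB hne
  push_cast at ht
  have := Int.self_le_toNat B
  omega

include hq hd_pos hrel in
/-- The set of weights is invariant under simple reflections. -/
lemma wt_refl [FiniteDimensional ℂ V] (ha_diag : ∀ i, a i i = 2) (i : Fin n) (μ : Fin n → ℤ)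
    (h : wtSp q d K ρ μ ≠ ⊥) : wtSp q d K ρ (fun k => μ k - μ i * a k i) ≠ ⊥ := by
  set α : Fin n → ℤ := fun k => a k i with hα
  have hα0 : α ≠ 0 := by
    intro h0; have := congrFun h0 i; simp [hα, ha_diag] at this
  have hQ0 : q ^ (d i : ℤ) ≠ 0 := zpow_ne_zero _ (q_ne_zero hq)
  have hd : (d i : ℤ) ≠ 0 := by have := hd_pos i; omega
  have hQ : ∀ k : ℤ, k ≠ 0 → (q ^ (d i : ℤ)) ^ k ≠ 1 := by
    intro k hk; rw [← zpow_mul]; exact q_zpow_ne_one hq _ (mul_ne_zero hd hk)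
  have hfinal : (fun k => μ k - μ i * a k i) = μ + (-μ i) • α := by
    funext k; simp [hα]; ring
  rw [hfinal]
  rcases le_total 0 (μ i) with hm | hm
  · refine sl2 (ρ (E i)) (ρ (F i)) (fun t => wtSp q d K ρ (μ + t • α)) hQ0 hQ (μ i) hm
      ?_ ?_ ?_ (wt_bdd hq hd_pos hrel ρ μ α hα0) (by simpa using h)
    · intro t x hx
      have := E_wt hq hrel ρ hx i
      rwa [show μ + t • α + (fun k => a k i) = μ + (t + 1) • α by rw [add_smul, one_smul, add_assoc]]
        at this
    · intro t x hx
      have := F_wt hq hrel ρ hx i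
      rwa [show μ + t • α - (fun k => a k i) = μ + (t - 1) • α by
        rw [sub_smul, one_smul, add_sub_assoc]] at this
    · intro t x hx
      have := EF_wt hq hrel ρ hx i i
      rw [if_pos rfl] at this
      rw [this]; congr 2
      simp [hα, ha_diag]; ring
  · have := sl2 (ρ (F i)) (ρ (E i)) (fun t => wtSp q d K ρ (μ + (-t) • α)) hQ0 hQ (-μ i)
      (by omega) ?_ ?_ ?_ ?_ (by simpa using h)
    · simpa using this
    · intro t x hx
      have := F_wt hq hrel ρ hx i
      rwa [show μ + (-t) • α - (fun k => a k i) = μ + (-(t + 1)) • α by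
        rw [neg_add, add_smul, neg_one_smul, ← add_assoc, ← sub_eq_add_neg]] at this
    · intro t x hx
      have := E_wt hq hrel ρ hx i
      rwa [show μ + (-t) • α + (fun k => a k i) = μ + (-(t - 1)) • α by
        rw [neg_sub, sub_eq_add_neg, add_comm 1, add_smul, one_smul, add_assoc]] at this
    · intro t x hx
      have := EF_wt hq hrel ρ hx i i
      rw [if_pos rfl] at this
      rw [← neg_sub, this, ← neg_smul]; congr 1
      unfold qi
      have e : (μ + -t • α) i = -(-μ i + 2 * t) := by simp [hα, ha_diag]; ring
      rw [e, neg_neg]; ring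
    · obtain ⟨T, hT⟩ := wt_bdd hq hd_pos hrel ρ μ (-α) (neg_ne_zero.mpr hα0)
      refine ⟨T, fun t ht => ?_⟩
      have := hT t ht
      rwa [smul_neg, ← neg_smul] at this

include hq hd_pos hrel hUuniv in
/-- All weights are below the highest weight. -/
lemma wt_le (hsimple : ∀ (N : Submodule ℂ V), (∀ (u : U), ∀ v ∈ N, ρ u v ∈ N) → N = ⊥ ∨ N = ⊤)
    (c : Fin n → ℤ) (v : V) (hv0 : v ≠ 0) (hv : v ∈ wtSp q d K ρ c) (hEv : ∀ i, ρ (E i) v = 0)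
    (μ : Fin n → ℤ) (h : wtSp q d K ρ μ ≠ ⊥) :
    ∃ b : Fin n → ℤ, (∀ i, 0 ≤ b i) ∧ μ = c - rt a b := by
  let f : Fin n → V → V := fun i x => ρ (F i) x
  have hwt : ∀ b x, Wd f v b x → x ∈ wtSp q d K ρ (c - rt a b) := by
    intro b x hx
    induction hx with
    | base => 
      have : rt a (0 : Fin n → ℤ) = 0 := by funext k; simp [rt]
      rw [this, sub_zero]; exact hv
    | step i b x _ ih =>
      have := F_wt hq hrel ρ ih i
      rw [rt_add, rt_single]
      simpa [sub_sub] using this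
  let N : Submodule ℂ V := Submodule.span ℂ {x | ∃ b, Wd f v b x}
  have hN : ∀ (b : Fin n → ℤ) x, Wd f v b x → x ∈ N := fun b x hx => Submodule.subset_span ⟨b, hx⟩
  have hEN : ∀ i b x, Wd f v b x → ρ (E i) x ∈ N := by
    intro i b x hx
    induction hx with
    | base => rw [hEv]; exact N.zero_mem
    | step k b x hx ih =>
      have h1 := EF_wt hq hrel ρ (hwt b x hx) i k
      have hFN : ∀ y ∈ N, ρ (F k) y ∈ N := by
        intro y hy
        have : N ≤ N.comap (ρ (F k)) := by
          refine Submodule.span_le.mpr ?_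
          rintro z ⟨b, hz⟩
          exact hN _ _ (Wd.step k b z hz)
        exact this hy
      change ρ (E i) (ρ (F k) x) ∈ N
      rw [eq_add_of_sub_eq h1]
      refine N.add_mem ?_ (hFN _ ih)
      split_ifs
      · exact N.smul_mem _ (hN _ _ hx)
      · exact N.zero_mem
  let S : Subalgebra ℂ U :=
    { carrier := {u | ∀ x ∈ N, ρ u x ∈ N}
      mul_mem' := by
        intro u w hu hw x hx
        rw [map_mul, Module.End.mul_apply]; exact hu _ (hw _ hx)
      add_mem' := by
        intro u w hu hw x hx
        rw [map_add, LinearMap.add_apply]; exact N.add_mem (hu _ hx) (hw _ hx)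
      algebraMap_mem' := by
        intro r x hx
        rw [AlgHom.commutes, Module.algebraMap_end_apply]; exact N.smul_mem _ hx }
  have hS : ∀ u : U, (∀ b x, Wd f v b x → ρ u x ∈ N) → u ∈ S := by
    intro u hu y hy
    have : N ≤ N.comap (ρ u) := by
      refine Submodule.span_le.mpr ?_
      rintro z ⟨b, hz⟩
      exact hu b z hz
    exact this hy
  have hall : ∀ u : U, u ∈ S := by
    refine generate hrel hUuniv S ?_ ?_ ?_ ?_
    · intro i; exact hS _ (hEN i)
    · intro i; exact hS _ (fun b x hx => hN _ _ (Wd.step i b x hx))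
    · intro i; refine hS _ (fun b x hx => ?_)
      rw [(mem_wt ρ).mp (hwt b x hx) i]; exact N.smul_mem _ (hN _ _ hx)
    · intro i; refine hS _ (fun b x hx => ?_)
      rw [Kinv_wt hq ρ (hwt b x hx) i]; exact N.smul_mem _ (hN _ _ hx)
  have hvN : v ∈ N := hN _ _ Wd.base
  have htop : N = ⊤ := by
    rcases hsimple N (fun u x hx => hall u x hx) with h | h
    · rw [h] at hvN; exact absurd (by simpa using hvN) hv0
    · exact h
  by_contra hcon
  push Not at hcon
  have hle : N ≤ ⨆ (ν : Fin n → ℤ) (_ : ν ≠ μ), wtSp q d K ρ ν := by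
    refine Submodule.span_le.mpr ?_
    rintro z ⟨b, hz⟩
    have hb := hcon b hz.nonneg
    exact Submodule.mem_iSup_of_mem (c - rt a b)
      (Submodule.mem_iSup_of_mem hb.symm (hwt b z hz))
  have := wt_indep hq hd_pos hrel ρ μ
  rw [htop] at hle
  rw [top_le_iff.mp hle, disjoint_top] at this
  exact h this

end modules

end LWR

theorem lowest_weight_raising
    -- the deformation parameter: a transcendental complex number
    (q : ℂ) (hq : Transcendental ℚ q)
    -- Cartan data of the complex semisimple Lie algebra 𝔤 of rank n
    (n : ℕ) (hn : 0 < n) (a : Fin n → Fin n → ℤ) (d : Fin n → ℕ)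
    (ha_diag : ∀ i, a i i = 2) (ha_off : ∀ i j, i ≠ j → a i j ≤ 0)
    (ha_zero : ∀ i j, a i j = 0 ↔ a j i = 0)
    (hd_pos : ∀ i, 0 < d i)
    (ha_symm : ∀ i j, (d i : ℤ) * a i j = (d j : ℤ) * a j i)
    -- the quantised enveloping algebra U = U_q(𝔤): carries elements E i, F i and units K i
    -- satisfying the defining relations, and is universal for these relations
    (U : Type) [Ring U] [Algebra ℂ U]
    (E F : Fin n → U) (K : Fin n → Uˣ)
    (hrel : UqRels q a d U E F K)
    (hUuniv : ∀ (B : Type) [Ring B] [Algebra ℂ B] (E' F' : Fin n → B) (K' : Fin n → Bˣ),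
      UqRels q a d B E' F' K' → ∃! φ : U →ₐ[ℂ] B,
        (∀ i, φ (E i) = E' i) ∧ (∀ i, φ (F i) = F' i) ∧ (∀ i, φ (K i : U) = (K' i : B)))
    -- the Weyl group W, acting faithfully on the weight lattice P = ℤⁿ (coordinates taken in
    -- the basis of fundamental weights ϖ i), generated by the simple reflections s i, with
    -- longest element w₀ (characterised by: w₀ maps dominant weights to antidominant ones)
    (W : Type) [Group W] [Finite W] (σ : W →* Multiplicative (AddAut (Fin n → ℤ)))
    (hσinj : Function.Injective σ)
    (s : Fin n → W) (hsgen : Subgroup.closure (Set.range s) = ⊤)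
    (hs : ∀ i (μ : Fin n → ℤ), σ (s i) μ = fun k => μ k - μ i * a k i)
    (w₀ : W) (hw₀ : ∀ μ : Fin n → ℤ, (∀ i, 0 ≤ μ i) → ∀ i, σ w₀ μ i ≤ 0)
    -- the simple finite-dimensional modules V(λ) of highest weight λ = ∑ c i ϖ i ∈ P⁺
    (V : (Fin n → ℕ) → Type) [∀ c, AddCommGroup (V c)] [∀ c, Module ℂ (V c)]
    (ρ : ∀ c, U →ₐ[ℂ] Module.End ℂ (V c))
    (hfd : ∀ c, FiniteDimensional ℂ (V c))
    (hsimple : ∀ c (N : Submodule ℂ (V c)), (∀ (u : U), ∀ v ∈ N, ρ c u v ∈ N) → N = ⊥ ∨ N = ⊤)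
    (hhw : ∀ c, ∃ v : V c, v ≠ 0 ∧ v ∈ wtSp q d K (ρ c) (fun i => (c i : ℤ)) ∧
      ∀ i, ρ c (E i) v = 0)
    (hwtsum : ∀ c, (⨆ μ : Fin n → ℤ, wtSp q d K (ρ c) μ) = ⊤)
    (hextremal : ∀ c (w : W),
      Module.finrank ℂ (wtSp q d K (ρ c) (σ w (fun i => (c i : ℤ)))) = 1) :
    -- if u is a nonzero lowest weight vector of V(ϖ_j) and E_i · u ≠ 0, then
    -- w₀ α_i = -α_j and E_i · u is a nonzero scalar multiple of a vector of weight w₀ s_j ϖ_j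
    ∀ j : Fin n, ∀ u : V (Pi.single j 1),
      u ∈ wtSp q d K (ρ (Pi.single j 1)) (σ w₀ (fun k => ((Pi.single j 1 : Fin n → ℕ) k : ℤ))) → u ≠ 0 →
      ∀ i : Fin n, ρ (Pi.single j 1) (E i) u ≠ 0 →
        (σ w₀ (fun k => a k i) = fun k => -(a k j)) ∧
        ρ (Pi.single j 1) (E i) u ∈
          wtSp q d K (ρ (Pi.single j 1)) (σ (w₀ * s j) (fun k => ((Pi.single j 1 : Fin n → ℕ) k : ℤ))) ∧
        ∀ v ∈ wtSp q d K (ρ (Pi.single j 1)) (σ (w₀ * s j) (fun k => ((Pi.single j 1 : Fin n → ℕ) k : ℤ))), v ≠ 0 →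
          ∃ z : ℂ, z ≠ 0 ∧ ρ (Pi.single j 1) (E i) u = z • v := by
  intro j u hu hu0 i hEu
  obtain ⟨g, hg⟩ : ∃ g : W → (Fin n → ℤ) → (Fin n → ℤ), ∀ w μ, g w μ = σ w μ :=
    ⟨fun w μ => σ w μ, fun _ _ => rfl⟩
  have g1 : ∀ μ, g 1 μ = μ := by intro μ; rw [hg, map_one]; rfl
  have gmul : ∀ w w' μ, g (w * w') μ = g w (g w' μ) := by
    intro w w' μ; rw [hg, hg, hg, map_mul]; rfl
  have gadd : ∀ w μ ν, g w (μ + ν) = g w μ + g w ν := by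
    intro w μ ν; rw [hg, hg, hg]; exact map_add (Multiplicative.toAdd (σ w)) μ ν
  have gs : ∀ i (μ : Fin n → ℤ), g (s i) μ = fun k => μ k - μ i * a k i := by
    intro i μ; rw [hg, hs]
  have gw₀ : ∀ μ : Fin n → ℤ, (∀ i, 0 ≤ μ i) → ∀ i, g w₀ μ i ≤ 0 := by
    intro μ hμ i; rw [hg]; exact hw₀ μ hμ i
  have g0 : ∀ w, g w 0 = 0 := by
    intro w; have := gadd w 0 0; simpa using this
  have gneg : ∀ w μ, g w (-μ) = - g w μ := by
    intro w μ
    have := gadd w (-μ) μ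
    rw [neg_add_cancel, g0] at this
    exact eq_neg_of_add_eq_zero_left this.symm
  have hcast : ∀ j : Fin n, (fun k => ((Pi.single j 1 : Fin n → ℕ) k : ℤ)) = Pi.single j 1 := by
    intro j; funext k; by_cases h : k = j
    · subst h; simp
    · simp [h]
  simp only [← hg, hcast] at hu ⊢
  obtain ⟨π, hinj, hπ⟩ := LWR.perm g g1 gmul gadd w₀ gw₀
  have hroot := LWR.w0_root a d ha_diag hd_pos ha_symm g g1 gmul s hsgen gs w₀ π hinj hπ
  have hzero := LWR.rt_inj_nonneg a d hd_pos ha_symm g g1 gmul s hsgen gs w₀ gw₀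
  -- weights of the fundamental modules
  have hle : ∀ (j : Fin n) (μ : Fin n → ℤ), wtSp q d K (ρ (Pi.single j 1)) μ ≠ ⊥ →
      ∃ b : Fin n → ℤ, (∀ i, 0 ≤ b i) ∧ μ = Pi.single j 1 - LWR.rt a b := by
    intro j μ hμ
    obtain ⟨v, hv0, hv, hEv⟩ := hhw (Pi.single j 1)
    rw [hcast] at hv
    exact LWR.wt_le hq hd_pos hrel hUuniv (ρ (Pi.single j 1)) (hsimple _) _ v hv0 hv hEv μ hμ
  have hW : ∀ (j : Fin n) (w : W) (μ : Fin n → ℤ), wtSp q d K (ρ (Pi.single j 1)) μ ≠ ⊥ →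
      wtSp q d K (ρ (Pi.single j 1)) (g w μ) ≠ ⊥ := by
    intro j w μ hμ
    haveI := hfd (Pi.single j 1)
    refine LWR.gen_ind s hsgen (fun w => wtSp q d K (ρ (Pi.single j 1)) (g w μ) ≠ ⊥) ?_ ?_ w
    · rwa [g1]
    · intro k w ih
      rw [gmul, gs]
      exact LWR.wt_refl hq hd_pos hrel _ ha_diag k _ ih
  have hext : ∀ (j : Fin n) (w : W),
      Module.finrank ℂ (wtSp q d K (ρ (Pi.single j 1)) (g w (Pi.single j 1))) = 1 := by
    intro j w
    have := hextremal (Pi.single j 1) w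
    rwa [hcast, ← hg] at this
  -- π is an involution
  have hinvol : ∀ j, π (π j) = j := by
    have h1 : ∀ j, ∃ b : Fin n → ℤ, (∀ i, 0 ≤ b i) ∧
        (Pi.single (π (π j)) 1 : Fin n → ℤ) = Pi.single j 1 - LWR.rt a b := by
      intro j
      have h2 : g (w₀ * w₀) (Pi.single j 1) = Pi.single (π (π j)) 1 := by
        rw [gmul, hπ, gneg, hπ, neg_neg]
      rw [← h2]
      apply hle
      intro hbot
      have := hext j (w₀ * w₀)
      rw [hbot, finrank_bot] at this
      exact zero_ne_one this
    choose b hb0 hb using h1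
    have hbij : Function.Bijective (fun j => π (π j)) :=
      Finite.injective_iff_bijective.mp (hinj.comp hinj)
    have hsum : LWR.rt a (∑ j, b j) = 0 := by
      rw [LWR.rt_sum]
      have h3 : ∀ j, LWR.rt a (b j) = Pi.single j 1 - Pi.single (π (π j)) 1 := by
        intro j; rw [hb j]; abel
      simp only [h3, Finset.sum_sub_distrib]
      rw [Function.Bijective.sum_comp hbij (fun j => (Pi.single j 1 : Fin n → ℤ)), sub_self]
    have hz := hzero _ (fun i => by
      rw [Finset.sum_apply]; exact Finset.sum_nonneg fun j _ => hb0 j i) hsum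
    intro j
    have hbj : b j = 0 := by
      funext i
      have h4 := congrFun hz i
      rw [Finset.sum_apply, Pi.zero_apply,
        Finset.sum_eq_zero_iff_of_nonneg (fun j _ => hb0 j i)] at h4
      exact h4 j (Finset.mem_univ j)
    have h5 := hb j
    rw [hbj] at h5
    have h6 : LWR.rt a (0 : Fin n → ℤ) = 0 := by funext k; simp [LWR.rt]
    rw [h6, sub_zero] at h5
    have h7 := congrFun h5 j
    by_contra hne
    simp [Ne.symm hne] at h7
  have hEw := LWR.E_wt hq hrel (ρ (Pi.single j 1)) hu i
  -- i = π j
  have hij : i = π j := by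
    by_contra hne
    haveI := hfd (Pi.single j 1)
    have h1 : wtSp q d K (ρ (Pi.single j 1)) (g w₀ (Pi.single j 1) + fun k => a k i) ≠ ⊥ :=
      (Submodule.ne_bot_iff _).mpr ⟨_, hEw, hEu⟩
    have h2 := hW j w₀ _ (LWR.wt_refl hq hd_pos hrel _ ha_diag i _ h1)
    have h3 : (fun k => (g w₀ (Pi.single j 1) + fun k => a k i) k -
        (g w₀ (Pi.single j 1) + fun k => a k i) i * a k i) =
        -(Pi.single (π j) 1 + fun k => a k i) := by
      rw [hπ]
      funext k
      simp [hne, ha_diag]; ring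
    rw [h3, gneg, gadd, hπ, hinvol, hroot] at h2
    obtain ⟨b, hb0, hb⟩ := hle j _ h2
    have h4 : LWR.rt a (b + Pi.single (π i) 1) = 0 := by
      rw [LWR.rt_add, LWR.rt_single]
      funext k
      have := congrFun hb k
      simp at this ⊢
      linarith
    have h5 := hzero _ (fun k => add_nonneg (hb0 k) (LWR.single_nonneg (π i) k)) h4
    have h6 := congrFun h5 (π i)
    have h7 := hb0 (π i)
    simp at h6
    omega
  have hwt : g (w₀ * s j) (Pi.single j 1) = g w₀ (Pi.single j 1) + fun k => a k i := by
    rw [gmul, gs]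
    have h1 : (fun k => (Pi.single j 1 : Fin n → ℤ) k - (Pi.single j 1 : Fin n → ℤ) j * a k j) =
        Pi.single j 1 + -(fun k => a k j) := by
      funext k; simp; ring
    rw [h1, gadd, gneg, hroot j, hij]
    congr 1
    funext k; simp
  refine ⟨?_, ?_, ?_⟩
  · rw [hroot, hij, hinvol]
  · rw [hwt]; exact hEw
  · intro v hv hv0
    have hfr := hext j (w₀ * s j)
    rw [← hwt] at hEw
    obtain ⟨z, hz⟩ := exists_smul_eq_of_finrank_eq_one hfr
      (x := ⟨v, hv⟩) (by simpa using hv0) ⟨_, hEw⟩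
    have hz' : z • v = ρ (Pi.single j 1) (E i) u := congrArg Subtype.val hz
    refine ⟨z, ?_, hz'.symm⟩
    rintro rfl
    rw [zero_smul] at hz'
    exact hEu hz'.symm
end
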